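/- arXiv:1012.5591 — 5 statements merged into one kernel-verified Lean document; each statement's English description precedes it below -/
import Mathlib

section
/- For every p ∈ [1, ∞) there exists a constant C_p > 0 such that for all u ∈ C_c^∞(B), (∫_B |u(x)|^p dx)^{2/p} ≤ C_p · H(u). In particular (p = 2), there is C > 0 with ∫_B u² dx ≤ C · H(u) for all u ∈ C_c^∞(B). -/
/-!
Let `d` be the dimension, `w = u / (1 - |x|²)` and `g = ∇u + w x`. Integrating the divergence of
`u w x` gives the ground state representation `H(u) = ∫ |g|² + (d - 1) ∫ u w`. Since
`u² ≤ u w`, both `∫ |g|²` and `∫ u²` are at most `H(u)` when `d ≥ 2`.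

The gradient of `u` itself is not controlled by `H(u)`, but for `q > 1` that of `|u|^q` is: the
divergence theorem for `|u|^q x` bounds the singular part `q ∫ |u|^(q-1) |w|` of
`∫ |∇|u|^q|` by integrals of `|u|^(q-1) |u|` and `|u|^(q-1) |g|`, so Cauchy–Schwarz yields
`∫ |∇|u|^q| ≤ C (∫ |u|^(2(q-1)))^(1/2) H(u)^(1/2)`. The planar Sobolev inequality
`‖f‖₂ ≤ C ‖∇f‖₁` applied to `f = |u|^q` with `2q = p + 2` becomes
`∫ |u|^(p+2) ≤ C H(u) ∫ |u|^p`. Starting from `0 < p ≤ 2`, where Jensen's inequality and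
`∫ u² ≤ H(u)` suffice, this reaches every exponent in steps of two.
-/

open MeasureTheory Real Filter

noncomputable section

/-- `ℝ²` as a Euclidean space. -/
abbrev E2 : Type := EuclideanSpace ℝ (Fin 2)

/-- The open unit disc in `ℝ²`. -/
def B2 : Set E2 := Metric.ball 0 1

/-- `u ∈ C_c^∞(B)`: a smooth function with compact support contained in the open unit disc. -/
def IsTest (u : E2 → ℝ) : Prop :=
  ContDiff ℝ (⊤ : ℕ∞) u ∧ HasCompactSupport u ∧ tsupport u ⊆ B2

/-- The Hardy functional `H(u) = ∫_B |∇u|² − ∫_B u²/(1−|x|²)²`. -/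
def H (u : E2 → ℝ) : ℝ :=
  (∫ x in B2, ‖gradient u x‖ ^ 2) - ∫ x in B2, (u x) ^ 2 / (1 - ‖x‖ ^ 2) ^ 2

section AbsRpow

variable {q : ℝ}

theorem abs_rpow_sub_two_mul_sq (t : ℝ) (hq : q ≠ 0) : |t| ^ (q - 2) * t ^ 2 = |t| ^ q := by
  rw [← sq_abs, ← Real.rpow_two, ← Real.rpow_add' (abs_nonneg t) (by simpa using hq),
    sub_add_cancel]

theorem abs_rpow_sub_one_mul_abs (t : ℝ) (hq : q ≠ 0) : |t| ^ (q - 1) * |t| = |t| ^ q := by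
  rw [← Real.rpow_add_one' (abs_nonneg t) (by simpa using hq), sub_add_cancel]

theorem abs_rpow_sub_two_mul_abs (t : ℝ) (hq : q ≠ 1) : |t| ^ (q - 2) * |t| = |t| ^ (q - 1) := by
  rw [← abs_rpow_sub_one_mul_abs t (sub_ne_zero.2 hq)]
  ring_nf

theorem fderiv_abs_rpow_apply {E : Type*} [NormedAddCommGroup E] [NormedSpace ℝ E] {u : E → ℝ}
    {x : E} (hu : DifferentiableAt ℝ u x) (hq : 1 < q) (v : E) :
    fderiv ℝ (fun y => |u y| ^ q) x v = q * (|u x| ^ (q - 2) * (u x * fderiv ℝ u x v)) := by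
  have h : HasFDerivAt (fun y => |u y| ^ q) _ x :=
    (hasDerivAt_abs_rpow (u x) hq).comp_hasFDerivAt x hu.hasFDerivAt
  rw [h.fderiv]
  simp [mul_assoc]

end AbsRpow

section Calculus

variable {E F : Type*} [NormedAddCommGroup E] [NormedSpace ℝ E] [MeasurableSpace E] [BorelSpace E]
  [NormedAddCommGroup F] [NormedSpace ℝ F] {μ : Measure E}

theorem integrable_fderiv_apply_self [IsFiniteMeasureOnCompacts μ] {f : E → F} (hf : ContDiff ℝ 1 f)
    (hc : HasCompactSupport f) : Integrable (fun x => fderiv ℝ f x x) μ :=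
  ((hf.continuous_fderiv one_ne_zero).clm_apply continuous_id).integrable_of_hasCompactSupport
    (.intro hc.isCompact fun x hx => by simp [fderiv_of_notMem_tsupport ℝ hx])

variable [FiniteDimensional ℝ E] [μ.IsAddHaarMeasure]

/-- The divergence theorem for the vector field `f x • x`. -/
theorem integral_fderiv_apply_self {f : E → F} (hf : ContDiff ℝ 1 f) (hc : HasCompactSupport f) :
    ∫ x, fderiv ℝ f x x ∂μ = -((Module.finrank ℝ E : ℝ) • ∫ x, f x ∂μ) := by
  let b := Module.finBasis ℝ E
  let coord (i) : E →L[ℝ] ℝ := (b.coord i).toContinuousLinearMap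
  have hf_int : Integrable f μ := hf.continuous.integrable_of_hasCompactSupport hc
  have hcoord_int (i) : Integrable (fun x => coord i x • fderiv ℝ f x (b i)) μ :=
    ((coord i).continuous.smul ((hf.continuous_fderiv one_ne_zero).clm_apply
      continuous_const)).integrable_of_hasCompactSupport (hc.fderiv_apply ℝ (b i)).smul_left
  have by_parts (i) : ∫ x, coord i x • fderiv ℝ f x (b i) ∂μ = -∫ x, f x ∂μ := by
    have hcoord_fderiv (x : E) : fderiv ℝ (coord i) x (b i) = 1 := by
      rw [(coord i).fderiv]
      simp [coord]
    simpa only [hcoord_fderiv, one_smul] using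
      integral_smul_fderiv_eq_neg_fderiv_smul_of_integrable (μ := μ) (f := coord i) (g := f)
        (v := b i) (by simpa only [hcoord_fderiv, one_smul] using hf_int) (hcoord_int i)
        (((coord i).continuous.smul hf.continuous).integrable_of_hasCompactSupport hc.smul_left)
        (fun x _ => (coord i).differentiableAt) (fun x _ => hf.differentiable one_ne_zero x)
  have expand (x : E) : fderiv ℝ f x x = ∑ i, coord i x • fderiv ℝ f x (b i) := by
    conv_lhs => rw [← b.sum_repr x, map_sum]
    simp [coord]
  simp_rw [expand]
  rw [integral_finsetSum _ fun i _ => hcoord_int i]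
  simp [by_parts, Nat.cast_smul_eq_nsmul]

variable (μ)

theorem exists_integral_norm_rpow_le_rpow_integral_norm_fderiv [FiniteDimensional ℝ F] {p : ℝ}
    (hp : Real.HolderConjugate (Module.finrank ℝ E) p) :
    ∃ C : ℝ, 0 < C ∧ ∀ f : E → F, ContDiff ℝ 1 f → HasCompactSupport f →
      ∫ x, ‖f x‖ ^ p ∂μ ≤ C * (∫ x, ‖fderiv ℝ f x‖ ∂μ) ^ p := by
  let c : NNReal := lintegralPowLePowLIntegralFDerivConst μ p
  refine ⟨c + 1, by positivity, fun f hf hc => ?_⟩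
  have hp0 : 0 ≤ p := hp.symm.nonneg
  have hf'_int : Integrable (fderiv ℝ f) μ :=
    (hf.continuous_fderiv one_ne_zero).integrable_of_hasCompactSupport (hc.fderiv ℝ)
  have hlint : ∫⁻ x, ENNReal.ofReal (‖f x‖ ^ p) ∂μ ≤
      ENNReal.ofReal (c * (∫ x, ‖fderiv ℝ f x‖ ∂μ) ^ p) := by
    simp_rw [← ENNReal.ofReal_rpow_of_nonneg (norm_nonneg _) hp0, ofReal_norm]
    rw [ENNReal.ofReal_mul c.coe_nonneg, ← ENNReal.ofReal_rpow_of_nonneg (by positivity) hp0,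
      ofReal_integral_norm_eq_lintegral_enorm hf'_int]
    simpa using lintegral_pow_le_pow_lintegral_fderiv μ hf hc hp
  calc ∫ x, ‖f x‖ ^ p ∂μ = (∫⁻ x, ENNReal.ofReal (‖f x‖ ^ p) ∂μ).toReal :=
        integral_eq_lintegral_of_nonneg_ae (ae_of_all _ fun x => by positivity)
          (hf.continuous.norm.rpow_const fun _ => .inr hp0).aestronglyMeasurable
    _ ≤ c * (∫ x, ‖fderiv ℝ f x‖ ∂μ) ^ p := ENNReal.toReal_le_of_le_ofReal (by positivity) hlint
    _ ≤ (c + 1) * (∫ x, ‖fderiv ℝ f x‖ ∂μ) ^ p := by gcongr; simp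

end Calculus

section MeanInequalities

variable {α : Type*} [MeasurableSpace α] {μ : Measure α}

theorem integral_mul_le_sqrt_mul_sqrt {f g : α → ℝ} (hf : MemLp f 2 μ) (hg : MemLp g 2 μ) :
    ∫ x, f x * g x ∂μ ≤ √(∫ x, f x ^ 2 ∂μ) * √(∫ x, g x ^ 2 ∂μ) := by
  calc ∫ x, f x * g x ∂μ ≤ ‖∫ x, f x * g x ∂μ‖ := le_abs_self _
    _ ≤ ∫ x, ‖f x‖ * ‖g x‖ ∂μ := by
        simpa only [norm_mul] using norm_integral_le_integral_norm (fun x => f x * g x)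
    _ ≤ √(∫ x, f x ^ 2 ∂μ) * √(∫ x, g x ^ 2 ∂μ) := by
        simpa [Real.sqrt_eq_rpow, -Real.norm_eq_abs, Real.norm_eq_abs, sq_abs] using
          integral_mul_norm_le_Lp_mul_Lq (f := f) (g := g) Real.HolderConjugate.two_two
            (by simpa using hf) (by simpa using hg)

theorem setIntegral_rpow_le {s : Set α} (hs₀ : μ s ≠ 0) (hs : μ s ≠ ⊤) {r : ℝ} (hr₀ : 0 ≤ r)
    (hr₁ : r ≤ 1) {f : α → ℝ} (hf₀ : ∀ x, 0 ≤ f x) (hf : IntegrableOn f s μ)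
    (hfr : IntegrableOn (fun x => f x ^ r) s μ) :
    ∫ x in s, f x ^ r ∂μ ≤ μ.real s * (μ.real s)⁻¹ ^ r * (∫ x in s, f x ∂μ) ^ r := by
  have hpos : 0 < μ.real s := ENNReal.toReal_pos hs₀ hs
  have jensen : ⨍ x in s, f x ^ r ∂μ ≤ (⨍ x in s, f x ∂μ) ^ r :=
    (Real.concaveOn_rpow hr₀ hr₁).le_map_set_average
      (continuousOn_id.rpow_const fun _ _ => .inr hr₀) isClosed_Ici hs₀ hs (ae_of_all _ hf₀) hf hfr
  rw [setAverage_eq, setAverage_eq, smul_eq_mul, smul_eq_mul, inv_mul_le_iff₀ hpos,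
    Real.mul_rpow (by positivity) (integral_nonneg hf₀), ← mul_assoc] at jensen
  exact jensen

end MeanInequalities

/-- The singular quotient `w = u / (1 - |x|²)`, whose square is the potential term of the Hardy
functional. On the unit sphere it takes the junk value `0`. -/
def hardyQuot {E : Type*} [Norm E] (u : E → ℝ) (x : E) : ℝ := u x / (1 - ‖x‖ ^ 2)

/-- The space `C¹_c(B)` on the open unit ball `B` of a finite-dimensional space: the support is
closed and bounded, so its compactness need not be required. -/
structure IsC1Test {E : Type*} [NormedAddCommGroup E] [NormedSpace ℝ E] (u : E → ℝ) : Prop where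
  contDiff : ContDiff ℝ 1 u
  tsupport_subset : tsupport u ⊆ Metric.ball 0 1

section NormedSpace

variable {E : Type*} [NormedAddCommGroup E] [NormedSpace ℝ E] {u : E → ℝ} {x : E}

namespace IsC1Test

theorem norm_lt_one (hu : IsC1Test u) (hx : x ∈ tsupport u) : ‖x‖ < 1 :=
  mem_ball_zero_iff.1 (hu.tsupport_subset hx)

theorem one_sub_norm_sq_pos (hu : IsC1Test u) (hx : x ∈ tsupport u) : 0 < 1 - ‖x‖ ^ 2 := by
  nlinarith [norm_nonneg x, hu.norm_lt_one hx]

theorem hardyQuot_mul_one_sub_norm_sq (hu : IsC1Test u) (x : E) :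
    hardyQuot u x * (1 - ‖x‖ ^ 2) = u x := by
  by_cases hx : x ∈ tsupport u
  · exact div_mul_cancel₀ _ (hu.one_sub_norm_sq_pos hx).ne'
  · simp [hardyQuot, image_eq_zero_of_notMem_tsupport hx]

theorem sq_le_mul_hardyQuot (hu : IsC1Test u) (x : E) : u x ^ 2 ≤ u x * hardyQuot u x := by
  by_cases hx : x ∈ tsupport u
  · rw [hardyQuot, mul_div_assoc', ← sq]
    exact le_div_self (sq_nonneg _) (hu.one_sub_norm_sq_pos hx) (sub_le_self _ (sq_nonneg _))
  · simp [image_eq_zero_of_notMem_tsupport hx]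

theorem mul_hardyQuot_nonneg (hu : IsC1Test u) (x : E) : 0 ≤ u x * hardyQuot u x :=
  (sq_nonneg _).trans (hu.sq_le_mul_hardyQuot x)

theorem setIntegral_ball_eq_integral [MeasurableSpace E] {μ : Measure E} {f : E → ℝ}
    (hu : IsC1Test u) (hf₀ : ∀ x ∉ tsupport u, f x = 0) :
    ∫ x in Metric.ball 0 1, f x ∂μ = ∫ x, f x ∂μ :=
  setIntegral_eq_integral_of_forall_compl_eq_zero fun x hx =>
    hf₀ x fun hxu => hx (hu.tsupport_subset hxu)

variable [FiniteDimensional ℝ E]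

theorem hasCompactSupport (hu : IsC1Test u) : HasCompactSupport u :=
  Metric.isCompact_of_isClosed_isBounded (isClosed_tsupport u)
    (Metric.isBounded_ball.subset hu.tsupport_subset)

theorem integrable_of_eq_zero_off_tsupport [MeasurableSpace E] [BorelSpace E] {μ : Measure E}
    [IsFiniteMeasureOnCompacts μ] {f : E → ℝ} (hu : IsC1Test u) (hf : Continuous f)
    (hf₀ : ∀ x ∉ tsupport u, f x = 0) : Integrable f μ :=
  hf.integrable_of_hasCompactSupport (.intro hu.hasCompactSupport.isCompact hf₀)

theorem hasCompactSupport_abs_rpow (hu : IsC1Test u) {q : ℝ} (hq : q ≠ 0) :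
    HasCompactSupport fun x => |u x| ^ q :=
  hu.hasCompactSupport.comp_left (g := fun t => |t| ^ q) (by simp [hq])

theorem integrable_abs_rpow [MeasurableSpace E] [BorelSpace E] {μ : Measure E}
    [IsFiniteMeasureOnCompacts μ] (hu : IsC1Test u) {p : ℝ} (hp : 0 < p) :
    Integrable (fun x => |u x| ^ p) μ :=
  (hu.contDiff.continuous.abs.rpow_const fun _ => .inr hp.le).integrable_of_hasCompactSupport
    (hu.hasCompactSupport_abs_rpow hp.ne')

end IsC1Test

end NormedSpace

section InnerProductSpace

variable {E : Type*} [NormedAddCommGroup E] [InnerProductSpace ℝ E] {u : E → ℝ} {x : E}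

/-- The field `g = ∇u + w x`, whose square is the main term of the ground state representation. If
`u = φ v` with `φ = (1 - |x|²)^(1/2)`, then `g = φ ∇v` in the unit ball. -/
def hardyField [CompleteSpace E] (u : E → ℝ) (x : E) : E := gradient u x + hardyQuot u x • x

theorem norm_gradient_eq_norm_fderiv [CompleteSpace E] : ‖gradient u x‖ = ‖fderiv ℝ u x‖ := by
  rw [← toDual_gradient, LinearIsometryEquiv.norm_map]

theorem norm_hardyField_sq [CompleteSpace E] (u : E → ℝ) (x : E) :
    ‖hardyField u x‖ ^ 2 =
      ‖gradient u x‖ ^ 2 + 2 * (hardyQuot u x * fderiv ℝ u x x) + hardyQuot u x ^ 2 * ‖x‖ ^ 2 := by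
  rw [hardyField, norm_add_sq_real, inner_smul_right, inner_gradient_left, norm_smul, mul_pow,
    Real.norm_eq_abs, sq_abs]

theorem fderiv_apply_self_eq_inner_hardyField_sub [CompleteSpace E] (u : E → ℝ) (x : E) :
    fderiv ℝ u x x = inner ℝ (hardyField u x) x - hardyQuot u x * ‖x‖ ^ 2 := by
  rw [hardyField, inner_add_left, inner_gradient_left, real_inner_smul_left,
    real_inner_self_eq_norm_sq, add_sub_cancel_right]

theorem hasCompactSupport_hardyField [CompleteSpace E] (hc : HasCompactSupport u) :
    HasCompactSupport (hardyField u) :=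
  .intro hc.isCompact fun x hx => by
    simp [hardyField, gradient, fderiv_of_notMem_tsupport ℝ hx, hardyQuot,
      image_eq_zero_of_notMem_tsupport hx]

namespace IsC1Test

theorem contDiff_hardyQuot (hu : IsC1Test u) : ContDiff ℝ 1 (hardyQuot u) := by
  refine contDiff_iff_contDiffAt.2 fun x => ?_
  by_cases hx : x ∈ tsupport u
  · exact hu.contDiff.contDiffAt.div (contDiffAt_const.sub (contDiff_norm_sq ℝ).contDiffAt)
      (hu.one_sub_norm_sq_pos hx).ne'
  · have hquot : hardyQuot u =ᶠ[nhds x] fun _ => 0 :=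
      (notMem_tsupport_iff_eventuallyEq.1 hx).mono fun y hy => by simp [hardyQuot, hy]
    exact contDiffAt_const.congr_of_eventuallyEq hquot

theorem fderiv_apply_self (hu : IsC1Test u) (x : E) :
    fderiv ℝ u x x =
      fderiv ℝ (hardyQuot u) x x * (1 - ‖x‖ ^ 2) - 2 * ‖x‖ ^ 2 * hardyQuot u x := by
  have hquot := (hu.contDiff_hardyQuot.differentiable one_ne_zero x).hasFDerivAt
  have hweight : HasFDerivAt (fun y : E => 1 - ‖y‖ ^ 2) (-(2 • innerSL ℝ x)) x :=
    (hasStrictFDerivAt_norm_sq x).hasFDerivAt.const_sub 1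
  have hu_fderiv := hquot.fun_mul hweight
  simp only [hu.hardyQuot_mul_one_sub_norm_sq] at hu_fderiv
  rw [hu_fderiv.fderiv]
  simp only [add_apply, smul_apply, neg_apply, innerSL_apply_apply, real_inner_self_eq_norm_sq,
    smul_eq_mul, nsmul_eq_mul, Nat.cast_ofNat]
  ring

variable [CompleteSpace E]

theorem continuous_gradient (hu : IsC1Test u) : Continuous (gradient u) :=
  (InnerProductSpace.toDual ℝ E).symm.continuous.comp
    (hu.contDiff.continuous_fderiv one_ne_zero)

theorem continuous_hardyField (hu : IsC1Test u) : Continuous (hardyField u) :=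
  hu.continuous_gradient.add (hu.contDiff_hardyQuot.continuous.smul continuous_id)

theorem norm_fderiv_le (hu : IsC1Test u) (x : E) :
    ‖fderiv ℝ u x‖ ≤ ‖hardyField u x‖ + |hardyQuot u x| := by
  by_cases hx : x ∈ tsupport u
  · calc ‖fderiv ℝ u x‖ = ‖hardyField u x - hardyQuot u x • x‖ := by
          rw [hardyField, add_sub_cancel_right, norm_gradient_eq_norm_fderiv]
      _ ≤ ‖hardyField u x‖ + |hardyQuot u x| * ‖x‖ := by
          simpa [norm_smul] using norm_sub_le (hardyField u x) (hardyQuot u x • x)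
      _ ≤ ‖hardyField u x‖ + |hardyQuot u x| := by
          gcongr
          exact mul_le_of_le_one_right (abs_nonneg _) (hu.norm_lt_one hx).le
  · rw [fderiv_of_notMem_tsupport ℝ hx, norm_zero]
    positivity

/-- Split `|u|^(q-1) |w|` by `1 = (1 - |x|²) + |x|²`: the first part is `|u|^q`, in the second
`w |x|² = g · x - ∇u · x`, and `q |u|^(q-2) u (∇u · x)` is the radial derivative of `|u|^q`. -/
theorem abs_rpow_mul_abs_hardyQuot_le (hu : IsC1Test u) {q : ℝ} (hq : 1 < q) (x : E) :
    q * (|u x| ^ (q - 1) * |hardyQuot u x|) ≤ q * |u x| ^ q +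
      q * (|u x| ^ (q - 1) * ‖hardyField u x‖) - fderiv ℝ (fun y => |u y| ^ q) x x := by
  have hquot : |u x| ^ (q - 1) * |hardyQuot u x| = |u x| ^ (q - 2) * (u x * hardyQuot u x) := by
    rw [← abs_rpow_sub_two_mul_abs _ hq.ne', mul_assoc, ← abs_mul,
      abs_of_nonneg (hu.mul_hardyQuot_nonneg x)]
  have hpow : |u x| ^ (q - 2) * (u x * hardyQuot u x) * (1 - ‖x‖ ^ 2) = |u x| ^ q := by
    rw [← abs_rpow_sub_two_mul_sq _ (zero_lt_one.trans hq).ne', mul_assoc, mul_assoc,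
      hu.hardyQuot_mul_one_sub_norm_sq, sq]
  have hinner : |u x| ^ (q - 2) * (u x * inner ℝ (hardyField u x) x) ≤
      |u x| ^ (q - 1) * ‖hardyField u x‖ := by
    by_cases hx : x ∈ tsupport u
    · have hle : |inner ℝ (hardyField u x) x| ≤ ‖hardyField u x‖ :=
        (abs_real_inner_le_norm _ _).trans
          (mul_le_of_le_one_right (norm_nonneg _) (hu.norm_lt_one hx).le)
      rw [← abs_rpow_sub_two_mul_abs _ hq.ne', mul_assoc]
      refine mul_le_mul_of_nonneg_left ?_ (by positivity)
      calc u x * inner ℝ (hardyField u x) x ≤ |u x * inner ℝ (hardyField u x) x| := le_abs_self _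
        _ = |u x| * |inner ℝ (hardyField u x) x| := abs_mul _ _
        _ ≤ |u x| * ‖hardyField u x‖ := by gcongr
    · rw [image_eq_zero_of_notMem_tsupport hx, zero_mul, mul_zero]
      positivity
  calc q * (|u x| ^ (q - 1) * |hardyQuot u x|)
      = q * |u x| ^ q + q * (|u x| ^ (q - 2) * (u x * inner ℝ (hardyField u x) x)) -
          fderiv ℝ (fun y => |u y| ^ q) x x := by
        rw [fderiv_abs_rpow_apply (hu.contDiff.differentiable one_ne_zero x) hq,
          fderiv_apply_self_eq_inner_hardyField_sub, hquot, ← hpow]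
        ring
    _ ≤ _ := by gcongr

end IsC1Test

end InnerProductSpace

section FiniteDimensional

variable {E : Type*} [NormedAddCommGroup E] [InnerProductSpace ℝ E] [FiniteDimensional ℝ E]
  [MeasurableSpace E] [BorelSpace E] {u : E → ℝ}

/-- The Hardy functional of the unit ball of `E`. The integrals extend over all of `E`, which makes
no difference for functions supported in the ball. -/
def hardyFunctional (u : E → ℝ) : ℝ :=
  (∫ x, ‖gradient u x‖ ^ 2) - ∫ x, hardyQuot u x ^ 2

namespace IsC1Test

theorem integrable_norm_gradient_sq (hu : IsC1Test u) :
    Integrable fun x => ‖gradient u x‖ ^ 2 :=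
  hu.integrable_of_eq_zero_off_tsupport (hu.continuous_gradient.norm.pow 2) fun x hx => by
    simp [norm_gradient_eq_norm_fderiv, fderiv_of_notMem_tsupport ℝ hx]

theorem integrable_hardyQuot_sq (hu : IsC1Test u) : Integrable fun x => hardyQuot u x ^ 2 :=
  hu.integrable_of_eq_zero_off_tsupport (hu.contDiff_hardyQuot.continuous.pow 2) fun x hx => by
    simp [hardyQuot, image_eq_zero_of_notMem_tsupport hx]

theorem integrable_norm_hardyField_sq (hu : IsC1Test u) :
    Integrable fun x => ‖hardyField u x‖ ^ 2 :=
  hu.integrable_of_eq_zero_off_tsupport (hu.continuous_hardyField.norm.pow 2) fun x hx => by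
    simp [norm_hardyField_sq, norm_gradient_eq_norm_fderiv, fderiv_of_notMem_tsupport ℝ hx,
      hardyQuot, image_eq_zero_of_notMem_tsupport hx]

theorem integrable_mul_hardyQuot (hu : IsC1Test u) : Integrable fun x => u x * hardyQuot u x :=
  hu.integrable_of_eq_zero_off_tsupport
    (hu.contDiff.continuous.mul hu.contDiff_hardyQuot.continuous) fun x hx => by
      simp [image_eq_zero_of_notMem_tsupport hx]

/-- The ground state representation: the integrands of the two sides differ by the divergence of
the field `u w x`. -/
theorem hardyFunctional_eq (hu : IsC1Test u) :
    hardyFunctional u = (∫ x, ‖hardyField u x‖ ^ 2) +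
      (Module.finrank ℝ E - 1) * ∫ x, u x * hardyQuot u x := by
  have hprod : ContDiff ℝ 1 fun x => u x * hardyQuot u x := hu.contDiff.mul hu.contDiff_hardyQuot
  have hprod_supp : HasCompactSupport fun x => u x * hardyQuot u x :=
    hu.hasCompactSupport.mul_right
  have hprod_int := hu.integrable_mul_hardyQuot
  have hfield_int := hu.integrable_norm_hardyField_sq
  have hdiff_int : Integrable fun x => ‖hardyField u x‖ ^ 2 - u x * hardyQuot u x :=
    hfield_int.sub hprod_int
  have pointwise (x : E) : ‖gradient u x‖ ^ 2 - hardyQuot u x ^ 2 =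
      ‖hardyField u x‖ ^ 2 - u x * hardyQuot u x -
        fderiv ℝ (fun y => u y * hardyQuot u y) x x := by
    rw [fderiv_fun_mul (hu.contDiff.differentiable one_ne_zero x)
      (hu.contDiff_hardyQuot.differentiable one_ne_zero x)]
    simp only [add_apply, smul_apply, smul_eq_mul, norm_hardyField_sq, hu.fderiv_apply_self x]
    rw [← hu.hardyQuot_mul_one_sub_norm_sq x]
    ring
  calc hardyFunctional u = ∫ x, (‖gradient u x‖ ^ 2 - hardyQuot u x ^ 2) :=
        (integral_sub hu.integrable_norm_gradient_sq hu.integrable_hardyQuot_sq).symm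
    _ = (∫ x, ‖hardyField u x‖ ^ 2) - (∫ x, u x * hardyQuot u x) -
          ∫ x, fderiv ℝ (fun y => u y * hardyQuot u y) x x := by
        simp_rw [pointwise]
        rw [integral_sub hdiff_int (integrable_fderiv_apply_self hprod hprod_supp),
          integral_sub hfield_int hprod_int]
    _ = _ := by
        rw [integral_fderiv_apply_self hprod hprod_supp, smul_eq_mul]
        ring

theorem integral_norm_hardyField_sq_le (hu : IsC1Test u) (hd : 1 ≤ Module.finrank ℝ E) :
    ∫ x, ‖hardyField u x‖ ^ 2 ≤ hardyFunctional u := by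
  have hd' : (0 : ℝ) ≤ Module.finrank ℝ E - 1 := sub_nonneg.2 (mod_cast hd)
  rw [hu.hardyFunctional_eq]
  exact le_add_of_nonneg_right (mul_nonneg hd' (integral_nonneg hu.mul_hardyQuot_nonneg))

theorem integral_sq_le (hu : IsC1Test u) (hd : 2 ≤ Module.finrank ℝ E) :
    ∫ x, u x ^ 2 ≤ hardyFunctional u := by
  have hd' : (1 : ℝ) ≤ Module.finrank ℝ E - 1 := by
    have : (2 : ℝ) ≤ Module.finrank ℝ E := mod_cast hd
    linarith
  calc ∫ x, u x ^ 2 ≤ ∫ x, u x * hardyQuot u x :=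
        integral_mono_of_nonneg (ae_of_all _ fun _ => sq_nonneg _) hu.integrable_mul_hardyQuot
          (ae_of_all _ hu.sq_le_mul_hardyQuot)
    _ ≤ (Module.finrank ℝ E - 1) * ∫ x, u x * hardyQuot u x :=
        le_mul_of_one_le_left (integral_nonneg hu.mul_hardyQuot_nonneg) hd'
    _ ≤ hardyFunctional u := by
        rw [hu.hardyFunctional_eq]
        exact le_add_of_nonneg_left (integral_nonneg fun _ => sq_nonneg _)

theorem hardyFunctional_nonneg (hu : IsC1Test u) (hd : 1 ≤ Module.finrank ℝ E) :
    0 ≤ hardyFunctional u :=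
  (integral_nonneg fun _ => sq_nonneg _).trans (hu.integral_norm_hardyField_sq_le hd)

theorem integrable_abs_rpow_mul_norm_hardyField (hu : IsC1Test u) {q : ℝ} (hq : 0 < q) :
    Integrable fun x => |u x| ^ q * ‖hardyField u x‖ :=
  ((hu.contDiff.continuous.abs.rpow_const fun _ => .inr hq.le).mul
    hu.continuous_hardyField.norm).integrable_of_hasCompactSupport
      (hu.hasCompactSupport_abs_rpow hq.ne').mul_right

theorem integrable_abs_rpow_mul_abs_hardyQuot (hu : IsC1Test u) {q : ℝ} (hq : 0 < q) :
    Integrable fun x => |u x| ^ q * |hardyQuot u x| :=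
  ((hu.contDiff.continuous.abs.rpow_const fun _ => .inr hq.le).mul
    hu.contDiff_hardyQuot.continuous.abs).integrable_of_hasCompactSupport
      (hu.hasCompactSupport_abs_rpow hq.ne').mul_right

theorem integral_abs_rpow_mul_abs_hardyQuot_le (hu : IsC1Test u) {q : ℝ} (hq : 1 < q) :
    q * ∫ x, |u x| ^ (q - 1) * |hardyQuot u x| ≤
      (q + Module.finrank ℝ E) * (∫ x, |u x| ^ q) +
        q * ∫ x, |u x| ^ (q - 1) * ‖hardyField u x‖ := by
  have hq₀ : 0 < q := zero_lt_one.trans hq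
  have hpow : ContDiff ℝ 1 fun x => |u x| ^ q := hu.contDiff.norm_rpow hq
  have hpow_supp := hu.hasCompactSupport_abs_rpow hq₀.ne'
  have hpow_int := (hu.integrable_abs_rpow hq₀ (μ := volume)).const_mul q
  have hfield_int := (hu.integrable_abs_rpow_mul_norm_hardyField (sub_pos.2 hq)).const_mul q
  have hfderiv_int := integrable_fderiv_apply_self (μ := volume) hpow hpow_supp
  calc q * ∫ x, |u x| ^ (q - 1) * |hardyQuot u x|
      = ∫ x, q * (|u x| ^ (q - 1) * |hardyQuot u x|) := (integral_const_mul _ _).symm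
    _ ≤ ∫ x, (q * |u x| ^ q + q * (|u x| ^ (q - 1) * ‖hardyField u x‖) -
          fderiv ℝ (fun y => |u y| ^ q) x x) :=
        integral_mono ((hu.integrable_abs_rpow_mul_abs_hardyQuot (sub_pos.2 hq)).const_mul q)
          ((hpow_int.add hfield_int).sub hfderiv_int) (hu.abs_rpow_mul_abs_hardyQuot_le hq)
    _ = _ := by
        rw [integral_sub (hpow_int.fun_add hfield_int) hfderiv_int,
          integral_add hpow_int hfield_int, integral_const_mul, integral_const_mul,
          integral_fderiv_apply_self hpow hpow_supp, smul_eq_mul]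
        ring

theorem integral_norm_fderiv_abs_rpow_le (hu : IsC1Test u) {q : ℝ} (hq : 1 < q) :
    ∫ x, ‖fderiv ℝ (fun y => |u y| ^ q) x‖ ≤
      2 * q * (∫ x, |u x| ^ (q - 1) * ‖hardyField u x‖) +
        (q + Module.finrank ℝ E) * ∫ x, |u x| ^ q := by
  have hfield_int := hu.integrable_abs_rpow_mul_norm_hardyField (sub_pos.2 hq)
  have hquot_int := hu.integrable_abs_rpow_mul_abs_hardyQuot (sub_pos.2 hq)
  have pointwise (x : E) : ‖fderiv ℝ (fun y => |u y| ^ q) x‖ ≤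
      q * (|u x| ^ (q - 1) * ‖hardyField u x‖ + |u x| ^ (q - 1) * |hardyQuot u x|) := by
    calc ‖fderiv ℝ (fun y => |u y| ^ q) x‖ ≤ q * |u x| ^ (q - 1) * ‖fderiv ℝ u x‖ :=
          norm_fderiv_norm_rpow_le (hu.contDiff.differentiable one_ne_zero) hq
      _ ≤ q * |u x| ^ (q - 1) * (‖hardyField u x‖ + |hardyQuot u x|) := by
          gcongr
          exact hu.norm_fderiv_le x
      _ = _ := by ring
  calc ∫ x, ‖fderiv ℝ (fun y => |u y| ^ q) x‖
      ≤ ∫ x, q * (|u x| ^ (q - 1) * ‖hardyField u x‖ + |u x| ^ (q - 1) * |hardyQuot u x|) :=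
        integral_mono_of_nonneg (ae_of_all _ fun _ => norm_nonneg _)
          ((hfield_int.add hquot_int).const_mul q) (ae_of_all _ pointwise)
    _ = q * (∫ x, |u x| ^ (q - 1) * ‖hardyField u x‖) +
          q * ∫ x, |u x| ^ (q - 1) * |hardyQuot u x| := by
        rw [integral_const_mul, integral_add hfield_int hquot_int, mul_add]
    _ ≤ _ := by linarith [hu.integral_abs_rpow_mul_abs_hardyQuot_le hq]

theorem integral_norm_fderiv_abs_rpow_le_sqrt_mul_sqrt (hu : IsC1Test u)
    (hd : 2 ≤ Module.finrank ℝ E) {q : ℝ} (hq : 1 < q) :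
    ∫ x, ‖fderiv ℝ (fun y => |u y| ^ q) x‖ ≤
      (3 * q + Module.finrank ℝ E) * (√(∫ x, |u x| ^ (2 * (q - 1))) * √(hardyFunctional u)) := by
  have cauchy_schwarz {g : E → ℝ} (hg : MemLp g 2) (hg_le : ∫ x, g x ^ 2 ≤ hardyFunctional u) :
      ∫ x, |u x| ^ (q - 1) * g x ≤ √(∫ x, |u x| ^ (2 * (q - 1))) * √(hardyFunctional u) := by
    have hpow : MemLp (fun x => |u x| ^ (q - 1)) 2 :=
      Continuous.memLp_of_hasCompactSupport
        (hu.contDiff.continuous.abs.rpow_const fun _ => .inr (sub_pos.2 hq).le)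
        (hu.hasCompactSupport_abs_rpow (sub_pos.2 hq).ne')
    have hsq (x : E) : (|u x| ^ (q - 1)) ^ 2 = |u x| ^ (2 * (q - 1)) := by
      rw [mul_comm, Real.rpow_mul (abs_nonneg _), Real.rpow_two]
    have h := integral_mul_le_sqrt_mul_sqrt hpow hg
    simp only [hsq] at h
    exact h.trans (by gcongr)
  have hfield : ∫ x, |u x| ^ (q - 1) * ‖hardyField u x‖ ≤ _ :=
    cauchy_schwarz
      (hu.continuous_hardyField.memLp_of_hasCompactSupport
        (hasCompactSupport_hardyField hu.hasCompactSupport)).norm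
      (hu.integral_norm_hardyField_sq_le (one_le_two.trans hd))
  have hpow : ∫ x, |u x| ^ q ≤ √(∫ x, |u x| ^ (2 * (q - 1))) * √(hardyFunctional u) := by
    have h := cauchy_schwarz
      (hu.contDiff.continuous.memLp_of_hasCompactSupport hu.hasCompactSupport).abs
      (by simpa using hu.integral_sq_le hd)
    simpa [abs_rpow_sub_one_mul_abs _ (zero_lt_one.trans hq).ne'] using h
  calc _ ≤ _ := hu.integral_norm_fderiv_abs_rpow_le hq
    _ ≤ 2 * q * (√(∫ x, |u x| ^ (2 * (q - 1))) * √(hardyFunctional u)) +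
          (q + Module.finrank ℝ E) * (√(∫ x, |u x| ^ (2 * (q - 1))) * √(hardyFunctional u)) := by
        gcongr
    _ = _ := by ring

end IsC1Test

theorem exists_integral_abs_rpow_add_two_le (hd : Module.finrank ℝ E = 2) {p : ℝ} (hp : 0 < p) :
    ∃ C : ℝ, 0 < C ∧ ∀ u : E → ℝ, IsC1Test u →
      ∫ x, |u x| ^ (p + 2) ≤ C * hardyFunctional u * ∫ x, |u x| ^ p := by
  have hconj : Real.HolderConjugate (Module.finrank ℝ E) 2 := by
    rw [hd]
    exact Real.HolderConjugate.two_two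
  obtain ⟨C, hC, sobolev⟩ := exists_integral_norm_rpow_le_rpow_integral_norm_fderiv (F := ℝ)
    (volume : Measure E) hconj
  let q : ℝ := p / 2 + 1
  have hq : 1 < q := by simp [q, hp]
  refine ⟨C * (3 * q + 2) ^ 2, by positivity, fun u hu => ?_⟩
  have hpow (x : E) : |u x| ^ (p + 2) = ‖|u x| ^ q‖ ^ (2 : ℝ) := by
    rw [Real.norm_of_nonneg (by positivity), ← Real.rpow_mul (abs_nonneg _)]
    congr 1
    ring
  have hq_sub : 2 * (q - 1) = p := by ring
  calc ∫ x, |u x| ^ (p + 2) ≤ C * (∫ x, ‖fderiv ℝ (fun y => |u y| ^ q) x‖) ^ (2 : ℝ) := by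
        simp_rw [hpow]
        exact sobolev _ (hu.contDiff.norm_rpow hq) (hu.hasCompactSupport_abs_rpow (by positivity))
    _ ≤ C * ((3 * q + 2) * (√(∫ x, |u x| ^ p) * √(hardyFunctional u))) ^ (2 : ℝ) := by
        gcongr
        simpa [hd, hq_sub] using hu.integral_norm_fderiv_abs_rpow_le_sqrt_mul_sqrt hd.ge hq
    _ = _ := by
        rw [Real.rpow_two, mul_pow, mul_pow, Real.sq_sqrt (by positivity),
          Real.sq_sqrt (hu.hardyFunctional_nonneg (one_le_two.trans hd.ge))]
        ring

theorem exists_integral_abs_rpow_le_of_le_two (hd : 2 ≤ Module.finrank ℝ E) {p : ℝ} (hp₀ : 0 < p)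
    (hp₂ : p ≤ 2) :
    ∃ C : ℝ, 0 < C ∧ ∀ u : E → ℝ, IsC1Test u →
      ∫ x, |u x| ^ p ≤ C * hardyFunctional u ^ (p / 2) := by
  let V : ℝ := volume.real (Metric.ball (0 : E) 1)
  have hV₀ : volume (Metric.ball (0 : E) 1) ≠ 0 := (Metric.measure_ball_pos _ _ one_pos).ne'
  have hV : 0 < V := ENNReal.toReal_pos hV₀ measure_ball_lt_top.ne
  refine ⟨V * V⁻¹ ^ (p / 2), by positivity, fun u hu => ?_⟩
  have hpow (x : E) : |u x| ^ p = (u x ^ 2) ^ (p / 2) := by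
    rw [← sq_abs, ← Real.rpow_two, ← Real.rpow_mul (abs_nonneg _), mul_div_cancel₀ p two_ne_zero]
  have hsq_int : Integrable fun x => u x ^ 2 :=
    hu.integrable_of_eq_zero_off_tsupport (hu.contDiff.continuous.pow 2) fun x hx => by
      simp [image_eq_zero_of_notMem_tsupport hx]
  have hpow_int : Integrable fun x => (u x ^ 2) ^ (p / 2) := by
    simpa only [hpow] using hu.integrable_abs_rpow hp₀
  calc ∫ x, |u x| ^ p = ∫ x in Metric.ball 0 1, (u x ^ 2) ^ (p / 2) := by
        simp_rw [hpow]
        exact (hu.setIntegral_ball_eq_integral fun x hx => by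
          simp [image_eq_zero_of_notMem_tsupport hx, hp₀.ne']).symm
    _ ≤ V * V⁻¹ ^ (p / 2) * (∫ x in Metric.ball 0 1, u x ^ 2) ^ (p / 2) :=
        setIntegral_rpow_le hV₀ measure_ball_lt_top.ne (by positivity) (by linarith)
          (fun _ => sq_nonneg _) hsq_int.integrableOn hpow_int.integrableOn
    _ ≤ V * V⁻¹ ^ (p / 2) * hardyFunctional u ^ (p / 2) := by
        rw [hu.setIntegral_ball_eq_integral fun x hx => by
          simp [image_eq_zero_of_notMem_tsupport hx]]
        gcongr
        exact hu.integral_sq_le hd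

theorem exists_integral_abs_rpow_le (hd : Module.finrank ℝ E = 2) {p : ℝ} (hp : 0 < p) :
    ∃ C : ℝ, 0 < C ∧ ∀ u : E → ℝ, IsC1Test u →
      ∫ x, |u x| ^ p ≤ C * hardyFunctional u ^ (p / 2) := by
  obtain ⟨n, hn⟩ := exists_nat_ge (p / 2)
  induction n generalizing p with
  | zero =>
    rw [Nat.cast_zero] at hn
    linarith
  | succ n ih =>
    rcases le_or_gt p 2 with hp₂ | hp₂
    · exact exists_integral_abs_rpow_le_of_le_two hd.ge hp hp₂
    obtain ⟨r, rfl⟩ : ∃ r, p = r + 2 := ⟨p - 2, by ring⟩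
    have hr : 0 < r := by linarith
    obtain ⟨A, hA, hstep⟩ := exists_integral_abs_rpow_add_two_le hd hr
    obtain ⟨B, hB, hbound⟩ := ih hr (by push_cast at hn; linarith)
    refine ⟨A * B, by positivity, fun u hu => ?_⟩
    have hH := hu.hardyFunctional_nonneg (one_le_two.trans hd.ge)
    calc ∫ x, |u x| ^ (r + 2) ≤ A * hardyFunctional u * ∫ x, |u x| ^ r := hstep u hu
      _ ≤ A * hardyFunctional u * (B * hardyFunctional u ^ (r / 2)) := by
          gcongr
          exact hbound u hu
      _ = A * B * hardyFunctional u ^ ((r + 2) / 2) := by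
          rw [add_div, div_self two_ne_zero, Real.rpow_add_one' hH (by positivity)]
          ring

end FiniteDimensional

theorem H_eq_hardyFunctional {u : E2 → ℝ} (hu : IsC1Test u) : H u = hardyFunctional u := by
  have hgrad : ∫ x in B2, ‖gradient u x‖ ^ 2 = ∫ x, ‖gradient u x‖ ^ 2 :=
    hu.setIntegral_ball_eq_integral fun x hx => by
      simp [norm_gradient_eq_norm_fderiv, fderiv_of_notMem_tsupport ℝ hx]
  have hquot : ∫ x in B2, u x ^ 2 / (1 - ‖x‖ ^ 2) ^ 2 = ∫ x, hardyQuot u x ^ 2 := by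
    simp_rw [← div_pow]
    exact hu.setIntegral_ball_eq_integral fun x hx => by
      simp [image_eq_zero_of_notMem_tsupport hx]
  rw [H, hgrad, hquot, hardyFunctional]

theorem Lp_bound_by_hardy_general {p : ℝ} (hp : 0 < p) :
    ∃ C : ℝ, 0 < C ∧ ∀ u : E2 → ℝ, ContDiff ℝ 1 u → tsupport u ⊆ B2 →
      (∫ x in B2, |u x| ^ p) ^ (2 / p) ≤ C * H u := by
  obtain ⟨C, hC, hbound⟩ := exists_integral_abs_rpow_le (E := E2) finrank_euclideanSpace_fin hp
  refine ⟨C ^ (2 / p), by positivity, fun u hsmooth hsupp => ?_⟩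
  have hu : IsC1Test u := ⟨hsmooth, hsupp⟩
  have hH : 0 ≤ hardyFunctional u :=
    hu.hardyFunctional_nonneg (one_le_two.trans finrank_euclideanSpace_fin.ge)
  calc (∫ x in B2, |u x| ^ p) ^ (2 / p) = (∫ x, |u x| ^ p) ^ (2 / p) := by
        rw [B2, hu.setIntegral_ball_eq_integral fun x hx => by
          simp [image_eq_zero_of_notMem_tsupport hx, hp.ne']]
    _ ≤ (C * hardyFunctional u ^ (p / 2)) ^ (2 / p) := by
        gcongr
        exact hbound u hu
    _ = C ^ (2 / p) * H u := by
        rw [Real.mul_rpow hC.le (by positivity), ← Real.rpow_mul hH,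
          div_mul_div_cancel₀ two_ne_zero, div_self hp.ne', Real.rpow_one, H_eq_hardyFunctional hu]

/-- Refined Hardy inequality / embedding (Remark 1 and inequality (1.2)):
for every `p ∈ [1, ∞)` there is `C_p > 0` with `(∫_B |u|^p)^{2/p} ≤ C_p H(u)` for all
`u ∈ C_c^∞(B)`; in particular (`p = 2`) there is `C > 0` with `∫_B u² ≤ C H(u)`. -/
theorem Lp_bound_by_hardy :
    (∀ p : ℝ, 1 ≤ p →
      ∃ Cp : ℝ, 0 < Cp ∧ ∀ u : E2 → ℝ, IsTest u →
        (∫ x in B2, |u x| ^ p) ^ (2 / p) ≤ Cp * H u) ∧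
    ∃ C : ℝ, 0 < C ∧ ∀ u : E2 → ℝ, IsTest u →
      (∫ x in B2, (u x) ^ 2) ≤ C * H u := by
  have main {p : ℝ} (hp : 0 < p) : ∃ C : ℝ, 0 < C ∧ ∀ u : E2 → ℝ, IsTest u →
      (∫ x in B2, |u x| ^ p) ^ (2 / p) ≤ C * H u :=
    (Lp_bound_by_hardy_general hp).imp fun _ h =>
      ⟨h.1, fun u hu => h.2 u (hu.1.of_le (mod_cast le_top)) hu.2.2⟩
  exact ⟨fun p hp => main (zero_lt_one.trans_le hp), by simpa using main two_pos⟩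
end
end

section
/- Let a(r) = (1−r²)^{−2}. Suppose G : (0, 1) → ℝ is twice continuously differentiable and satisfies −G''(r) − G'(r)/r = a(r) G(r) for all r ∈ (0, 1), and suppose that G(r) + ln(r)/(2π) and r·G'(r) + 1/(2π) remain bounded as r → 0⁺. Then for every ρ ∈ (0, 1), ∫_{B_ρ} [ a(|x|) + 2|x|²/(1−|x|²)³ ] G(|x|)² dx − π ρ² G'(ρ)² − π a(ρ) ρ² G(ρ)² = −1/(4π), where B_ρ is the open disc of radius ρ centered at the origin in ℝ². -/
open MeasureTheory Real Filter

noncomputable section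

/-!
Let `a` be a radial weight and `b` half the divergence of `a(|x|) x`, that is `(r² a)' = 2 r b`.
The equation `-Δ G = a G` reads `(r G')' = -r a G`, so in the derivative of
`P(r) = (r G')² + r² a G²` the cross terms cancel and `P' = 2 r b G²`. In polar coordinates the
integral of `b G²` over `B_ρ` is therefore `π (P(ρ) - P(0⁺))`.

A logarithmic singularity of `G` gives `r² a G² → 0`, so `P(0⁺)` is the square of the limit of the
flux `r G'`. That limit exists because `(r G')'` is bounded near `0`. If `G + c log r` is bounded,
the limit of `r (G + c log r)' = r G' + c` can only be `0`: a nonzero limit would make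
`G + c log r` grow like `log r` (compare its values at `r²` and `r`). Hence `P(0⁺) = c²`, with
`c = 1 / (2π)` for the Green's function.
-/

open Set Topology Asymptotics

section PolarCoordinates

lemma setIntegral_ball_fun_norm_addHaar {E F : Type*} [NormedAddCommGroup E] [NormedSpace ℝ E]
    [FiniteDimensional ℝ E] [Nontrivial E] [MeasurableSpace E] [BorelSpace E]
    [NormedAddCommGroup F] [NormedSpace ℝ F] (μ : Measure E) [μ.IsAddHaarMeasure]
    (f : ℝ → F) (ρ : ℝ) :
    ∫ x in Metric.ball (0 : E) ρ, f ‖x‖ ∂μ = Module.finrank ℝ E • μ.real (Metric.ball 0 1) •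
      ∫ r in Ioo 0 ρ, r ^ (Module.finrank ℝ E - 1) • f r := by
  have indicator_ball : (Metric.ball (0 : E) ρ).indicator (fun x => f ‖x‖)
      = fun x => (Iio ρ).indicator f ‖x‖ := by
    ext x
    simp only [indicator, mem_ball_zero_iff, mem_Iio]
  rw [← integral_indicator Metric.isOpen_ball.measurableSet, indicator_ball,
    integral_fun_norm_addHaar μ, ← Ioi_inter_Iio, ← setIntegral_indicator measurableSet_Iio]
  simp only [indicator_smul_apply]

lemma setIntegral_ball_fun_norm_plane (f : ℝ → ℝ) {ρ : ℝ} (hρ : 0 ≤ ρ) :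
    ∫ x in Metric.ball (0 : E2) ρ, f ‖x‖ = π * ∫ r in 0..ρ, 2 * r * f r := by
  have volume_disc : (volume : Measure E2).real (Metric.ball 0 1) = π := by
    simp [Measure.real, pi_nonneg]
  rw [setIntegral_ball_fun_norm_addHaar, volume_disc, intervalIntegral.integral_of_le hρ,
    integral_Ioc_eq_integral_Ioo]
  simp only [finrank_euclideanSpace, Fintype.card_fin, Nat.add_one_sub_one, pow_one, smul_eq_mul,
    nsmul_eq_mul, Nat.cast_ofNat, mul_assoc, integral_const_mul]
  ring

end PolarCoordinates

section OneSidedLimits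

lemma exists_tendsto_nhdsGT_of_isBigO_one_deriv {f f' : ℝ → ℝ} {a : ℝ}
    (hf : ∀ᶠ x in 𝓝[>] a, HasDerivAt f (f' x) x)
    (hf' : f' =O[𝓝[>] a] fun _ => (1 : ℝ)) :
    ∃ L, Tendsto f (𝓝[>] a) (𝓝 L) := by
  obtain ⟨C, hC0, hC⟩ := hf'.exists_nonneg
  lift C to NNReal using hC0
  obtain ⟨b, hab, hb⟩ := mem_nhdsGT_iff_exists_Ioo_subset.1 (hf.and hC.bound)
  have hLip : LipschitzOnWith C f (Ioo a b) :=
    (convex_Ioo a b).lipschitzOnWith_of_nnnorm_hasDerivWithin_le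
      (fun x hx => (hb hx).1.hasDerivWithinAt)
      (fun x hx => by simpa [← NNReal.coe_le_coe] using (hb hx).2)
  obtain ⟨g, hg, hfg⟩ := hLip.extend_real
  exact ⟨g a, ((hg.continuous.tendsto a).mono_left nhdsWithin_le_nhds).congr'
    (mem_of_superset (Ioo_mem_nhdsGT hab) hfg.symm)⟩

lemma exists_mul_deriv_mul_log_sub_log_eq {h h' : ℝ → ℝ} {x y : ℝ} (hx : 0 < x) (hxy : x < y)
    (hd : ∀ t ∈ Icc x y, HasDerivAt h (h' t) t) :
    ∃ ξ ∈ Ioo x y, ξ * h' ξ * (log y - log x) = h y - h x := by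
  have hlog : ∀ t ∈ Icc x y, HasDerivAt log t⁻¹ t := fun t ht =>
    hasDerivAt_log (hx.trans_le ht.1).ne'
  obtain ⟨ξ, hξ, hcauchy⟩ := exists_ratio_hasDerivAt_eq_ratio_slope h h' hxy
    (fun t ht => (hd t ht).continuousAt.continuousWithinAt)
    (fun t ht => hd t (Ioo_subset_Icc_self ht)) log (·⁻¹)
    (fun t ht => (hlog t ht).continuousAt.continuousWithinAt)
    (fun t ht => hlog t (Ioo_subset_Icc_self ht))
  refine ⟨ξ, hξ, ?_⟩
  have hξ0 : ξ ≠ 0 := (hx.trans hξ.1).ne'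
  rw [mul_assoc, mul_comm (h' ξ), hcauchy, mul_left_comm, mul_inv_cancel₀ hξ0, mul_one]

lemma exists_tendsto_mul_deriv_eq_sub_sq_div_log {h h' : ℝ → ℝ}
    (hd : ∀ᶠ r in 𝓝[>] 0, HasDerivAt h (h' r) r) :
    ∃ ξ : ℝ → ℝ, Tendsto ξ (𝓝[>] 0) (𝓝[>] 0) ∧
      ∀ᶠ r in 𝓝[>] 0, ξ r * h' (ξ r) = (h r - h (r ^ 2)) / -log r := by
  obtain ⟨δ, hδ, hdδ⟩ := mem_nhdsGT_iff_exists_Ioo_subset.1 hd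
  have mean_value : ∀ᶠ r in 𝓝[>] (0 : ℝ), ∃ ξ, ξ ∈ Ioo (r ^ 2) r ∧
      ξ * h' ξ = (h r - h (r ^ 2)) / -log r := by
    filter_upwards [Ioo_mem_nhdsGT hδ, Ioo_mem_nhdsGT one_pos] with r hrδ hr1
    obtain ⟨ξ, hξ, hslope⟩ := exists_mul_deriv_mul_log_sub_log_eq (h := h) (pow_pos hr1.1 2)
      (pow_lt_self_of_lt_one₀ hr1.1 hr1.2 one_lt_two)
      (fun t ht => hdδ ⟨(pow_pos hr1.1 2).trans_le ht.1, ht.2.trans_lt hrδ.2⟩)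
    have log_sub_log_sq : log r - log (r ^ 2) = -log r := by
      rw [log_pow]
      push_cast
      ring
    rw [log_sub_log_sq] at hslope
    exact ⟨ξ, hξ, eq_div_of_mul_eq (neg_pos.2 (log_neg hr1.1 hr1.2)).ne' hslope⟩
  obtain ⟨ξ, hξ⟩ := mean_value.choice
  have hξ_pos : ∀ᶠ r in 𝓝[>] 0, 0 < ξ r := hξ.mono fun r hr => (sq_nonneg r).trans_lt hr.1.1
  have hξ_zero : Tendsto ξ (𝓝[>] 0) (𝓝 0) :=
    squeeze_zero' (hξ_pos.mono fun _ => le_of_lt) (hξ.mono fun _ hr => hr.1.2.le)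
      (tendsto_id.mono_left nhdsWithin_le_nhds)
  exact ⟨ξ, tendsto_nhdsWithin_iff.2 ⟨hξ_zero, hξ_pos⟩, hξ.mono fun _ hr => hr.2⟩

lemma eq_zero_of_isBigO_one_of_tendsto_mul_deriv {h h' : ℝ → ℝ} {l : ℝ}
    (hd : ∀ᶠ r in 𝓝[>] 0, HasDerivAt h (h' r) r) (hb : h =O[𝓝[>] 0] fun _ => (1 : ℝ))
    (hl : Tendsto (fun r => r * h' r) (𝓝[>] 0) (𝓝 l)) : l = 0 := by
  obtain ⟨ξ, hξ_zero, hξ⟩ := exists_tendsto_mul_deriv_eq_sub_sq_div_log hd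
  have hsq : Tendsto (fun r : ℝ => r ^ 2) (𝓝[>] 0) (𝓝[>] 0) := tendsto_nhdsWithin_iff.2
    ⟨by simpa using (continuousAt_pow (0 : ℝ) 2).mono_left nhdsWithin_le_nhds,
      eventually_mem_nhdsWithin.mono fun r (hr : 0 < r) => pow_pos hr 2⟩
  have hdiff : (fun r => h r - h (r ^ 2)) =O[𝓝[>] 0] fun _ => (1 : ℝ) :=
    hb.sub (hb.comp_tendsto hsq)
  have hinv_log : Tendsto (fun r : ℝ => (-log r)⁻¹) (𝓝[>] 0) (𝓝 0) :=
    (tendsto_neg_atBot_atTop.comp tendsto_log_nhdsGT_zero).inv_tendsto_atTop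
  have hratio : Tendsto (fun r => (h r - h (r ^ 2)) / -log r) (𝓝[>] 0) (𝓝 0) :=
    (hdiff.mul (isBigO_refl _ _)).trans_tendsto (by simpa using hinv_log)
  exact tendsto_nhds_unique (hl.comp hξ_zero) (hratio.congr' (hξ.mono fun _ hr => hr.symm))

lemma tendsto_rpow_mul_of_add_mul_log_isBigO_one {G : ℝ → ℝ} {c s : ℝ} (hs : 0 < s)
    (hlog : (fun r => G r + c * log r) =O[𝓝[>] 0] fun _ => (1 : ℝ)) :
    Tendsto (fun r => r ^ s * G r) (𝓝[>] 0) (𝓝 0) := by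
  have hpow : Tendsto (fun r : ℝ => r ^ s) (𝓝[>] 0) (𝓝 0) := by
    simpa [zero_rpow hs.ne'] using
      ((continuousAt_rpow_const 0 s (.inr hs.le)).tendsto).mono_left nhdsWithin_le_nhds
  have hbounded : Tendsto (fun r => r ^ s * (G r + c * log r)) (𝓝[>] 0) (𝓝 0) :=
    ((isBigO_refl _ _).mul hlog).trans_tendsto (by simpa using hpow)
  have hdiff := hbounded.sub ((tendsto_log_mul_rpow_nhdsGT_zero hs).const_mul c)
  rw [mul_zero, sub_zero] at hdiff
  exact hdiff.congr fun r => by ring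

lemma tendsto_mul_of_add_mul_log_isBigO_one {G : ℝ → ℝ} {c : ℝ}
    (hlog : (fun r => G r + c * log r) =O[𝓝[>] 0] fun _ => (1 : ℝ)) :
    Tendsto (fun r => r * G r) (𝓝[>] 0) (𝓝 0) := by
  simpa only [rpow_one] using tendsto_rpow_mul_of_add_mul_log_isBigO_one one_pos hlog

lemma intervalIntegrable_of_continuousOn_Ioc_of_isBigO_one {f : ℝ → ℝ} {a b : ℝ} (hab : a < b)
    (hf : ContinuousOn f (Ioc a b)) (hbdd : f =O[𝓝[>] a] fun _ => (1 : ℝ)) :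
    IntervalIntegrable f volume a b := by
  have hmeas : StronglyMeasurableAtFilter f (𝓝[>] a) :=
    ⟨Ioc a b, Ioc_mem_nhdsGT hab, hf.aestronglyMeasurable measurableSet_Ioc⟩
  obtain ⟨s, hs, hint⟩ := (volume.finiteAt_nhdsWithin a (Ioi a)).integrableAtFilter hmeas
    ((isBigO_one_iff ℝ).1 hbdd)
  obtain ⟨t, ht, hts⟩ := (mem_nhdsGT_iff_exists_mem_Ioc_Ioo_subset hab).1 hs
  have near : IntervalIntegrable f volume a t :=
    (intervalIntegrable_iff_integrableOn_Ioo_of_le ht.1.le).2 (hint.mono_set hts)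
  have away : IntervalIntegrable f volume t b :=
    (hf.mono fun x hx => ⟨ht.1.trans_le hx.1, hx.2⟩).intervalIntegrable_of_Icc ht.2
  exact near.trans away

end OneSidedLimits

section RadialSolutions

/-- `x ↦ G ‖x‖` is a solution of `-Δ u = a(|x|) u` on the punctured disc `0 < |x| < R` of the plane.
The equation is encoded in the divergence form `(r G')' = -r a G`. -/
structure IsRadialSolution (a G : ℝ → ℝ) (R : ℝ) : Prop where
  hasDerivAt : ∀ r ∈ Ioo 0 R, HasDerivAt G (deriv G r) r
  hasDerivAt_flux : ∀ r ∈ Ioo 0 R,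
    HasDerivAt (fun s => s * deriv G s) (-(r * (a r * G r))) r

/-- The radial weight `a(|x|)` and half the divergence `b(|x|)` of the vector field `a(|x|) x` of
the plane, on the punctured disc `0 < |x| < R`, both bounded near the center. In polar coordinates
the divergence relation between them reads `(r² a)' = 2 r b`. -/
structure IsRadialWeight (a b : ℝ → ℝ) (R : ℝ) : Prop where
  hasDerivAt : ∀ r ∈ Ioo 0 R, HasDerivAt (fun s => s ^ 2 * a s) (2 * r * b r) r
  continuousOn : ContinuousOn b (Ioo 0 R)
  isBigO_one : a =O[𝓝[>] 0] fun _ => (1 : ℝ)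
  isBigO_one_halfDiv : b =O[𝓝[>] 0] fun _ => (1 : ℝ)

/-- The radial Pohozaev function of the equation `-Δ u = a(|x|) u`: `π` times its value at `ρ`
is the boundary term of the Pohozaev identity on the disc `B_ρ`. -/
def radialPohozaev (a G : ℝ → ℝ) (r : ℝ) : ℝ :=
  (r * deriv G r) ^ 2 + r ^ 2 * a r * G r ^ 2

variable {a b G : ℝ → ℝ} {R c : ℝ}

namespace IsRadialSolution

lemma of_contDiffOn (hG : ContDiffOn ℝ 2 G (Ioo 0 R))
    (hODE : ∀ r ∈ Ioo 0 R, -(deriv (deriv G) r) - deriv G r / r = a r * G r) :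
    IsRadialSolution a G R := by
  have hasDerivAt_of_mem {f : ℝ → ℝ} (hf : DifferentiableOn ℝ f (Ioo 0 R)) (r : ℝ)
      (hr : r ∈ Ioo 0 R) : HasDerivAt f (deriv f r) r :=
    (hf.differentiableAt (isOpen_Ioo.mem_nhds hr)).hasDerivAt
  have hG' : ContDiffOn ℝ 1 (deriv G) (Ioo 0 R) := hG.deriv_of_isOpen isOpen_Ioo (by norm_num)
  refine ⟨hasDerivAt_of_mem (hG.differentiableOn two_ne_zero), fun r hr => ?_⟩
  refine ((hasDerivAt_id' r).mul
    (hasDerivAt_of_mem (hG'.differentiableOn one_ne_zero) r hr)).congr_deriv ?_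
  have hr0 : r ≠ 0 := hr.1.ne'
  rw [← hODE r hr]
  field_simp
  ring

lemma tendsto_flux (h : IsRadialSolution a G R) (hR : 0 < R) (ha : a =O[𝓝[>] 0] fun _ => (1 : ℝ))
    (hlog : (fun r => G r + c * log r) =O[𝓝[>] 0] fun _ => (1 : ℝ)) :
    Tendsto (fun r => r * deriv G r) (𝓝[>] 0) (𝓝 (-c)) := by
  have hmem : ∀ᶠ r in 𝓝[>] 0, r ∈ Ioo 0 R := Ioo_mem_nhdsGT hR
  have hflux' : (fun r => -(r * (a r * G r))) =O[𝓝[>] 0] fun _ => (1 : ℝ) := by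
    have hrG := (tendsto_mul_of_add_mul_log_isBigO_one hlog).isBigO_one ℝ
    simpa only [mul_left_comm, mul_one] using (ha.mul hrG).neg_left
  obtain ⟨L, hL⟩ := exists_tendsto_nhdsGT_of_isBigO_one_deriv (hmem.mono h.hasDerivAt_flux) hflux'
  have hderiv : ∀ᶠ r in 𝓝[>] 0,
      HasDerivAt (fun s => G s + c * log s) (deriv G r + c * r⁻¹) r :=
    hmem.mono fun r hr => (h.hasDerivAt r hr).add ((hasDerivAt_log hr.1.ne').const_mul c)
  have hsum : L + c = 0 := by
    refine eq_zero_of_isBigO_one_of_tendsto_mul_deriv hderiv hlog ((hL.add_const c).congr' ?_)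
    filter_upwards [hmem] with r hr
    rw [mul_add, mul_left_comm, mul_inv_cancel₀ hr.1.ne', mul_one]
  rwa [← eq_neg_of_add_eq_zero_left hsum]

lemma hasDerivAt_radialPohozaev (h : IsRadialSolution a G R) {r : ℝ} (hr : r ∈ Ioo 0 R)
    (hab : HasDerivAt (fun s => s ^ 2 * a s) (2 * r * b r) r) :
    HasDerivAt (radialPohozaev a G) (2 * r * (b r * G r ^ 2)) r := by
  refine (((h.hasDerivAt_flux r hr).pow 2).add
    (hab.mul ((h.hasDerivAt r hr).pow 2))).congr_deriv ?_
  simp only [Nat.add_one_sub_one, pow_one, Nat.cast_ofNat, Pi.pow_apply]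
  ring

lemma tendsto_radialPohozaev (h : IsRadialSolution a G R) (hR : 0 < R)
    (ha : a =O[𝓝[>] 0] fun _ => (1 : ℝ))
    (hlog : (fun r => G r + c * log r) =O[𝓝[>] 0] fun _ => (1 : ℝ)) :
    Tendsto (radialPohozaev a G) (𝓝[>] 0) (𝓝 (c ^ 2)) := by
  have hpotential : Tendsto (fun r => a r * (r * G r) ^ 2) (𝓝[>] 0) (𝓝 0) :=
    (ha.mul (isBigO_refl _ _)).trans_tendsto (by
      simpa using (tendsto_mul_of_add_mul_log_isBigO_one hlog).pow 2)
  have hsum := ((h.tendsto_flux hR ha hlog).pow 2).add hpotential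
  rw [neg_sq, add_zero] at hsum
  exact hsum.congr fun r => by rw [radialPohozaev]; ring

lemma intervalIntegrable_two_mul_mul_sq (h : IsRadialSolution a G R) {ρ : ℝ} (hρ : ρ ∈ Ioo 0 R)
    (hb : ContinuousOn b (Ioo 0 R)) (hb0 : b =O[𝓝[>] 0] fun _ => (1 : ℝ))
    (hlog : (fun r => G r + c * log r) =O[𝓝[>] 0] fun _ => (1 : ℝ)) :
    IntervalIntegrable (fun r => 2 * r * (b r * G r ^ 2)) volume 0 ρ := by
  have hG : ContinuousOn G (Ioo 0 R) := fun r hr =>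
    (h.hasDerivAt r hr).continuousAt.continuousWithinAt
  have hrG2 : Tendsto (fun r => (r ^ (1 / 2 : ℝ) * G r) ^ 2) (𝓝[>] 0) (𝓝 0) := by
    simpa using (tendsto_rpow_mul_of_add_mul_log_isBigO_one one_half_pos hlog).pow 2
  refine intervalIntegrable_of_continuousOn_Ioc_of_isBigO_one hρ.1 ?_ ?_
  · exact (by fun_prop : ContinuousOn _ (Ioo 0 R)).mono fun r hr => ⟨hr.1, hr.2.trans_lt hρ.2⟩
  · refine ((hb0.mul (hrG2.isBigO_one ℝ)).const_mul_left 2).congr' ?_ (by simp)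
    filter_upwards [eventually_mem_nhdsWithin] with r (hr : 0 < r)
    rw [mul_pow, ← sqrt_eq_rpow, sq_sqrt hr.le]
    ring

lemma integral_two_mul_mul_sq (h : IsRadialSolution a G R) (hw : IsRadialWeight a b R)
    (hlog : (fun r => G r + c * log r) =O[𝓝[>] 0] fun _ => (1 : ℝ)) {ρ : ℝ} (hρ : ρ ∈ Ioo 0 R) :
    ∫ r in 0..ρ, 2 * r * (b r * G r ^ 2) = radialPohozaev a G ρ - c ^ 2 := by
  have hderiv : ∀ r ∈ Ioo 0 R, HasDerivAt (radialPohozaev a G) (2 * r * (b r * G r ^ 2)) r :=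
    fun r hr => h.hasDerivAt_radialPohozaev hr (hw.hasDerivAt r hr)
  exact intervalIntegral.integral_eq_sub_of_hasDerivAt_of_tendsto hρ.1
    (fun r hr => hderiv r ⟨hr.1, hr.2.trans hρ.2⟩)
    (h.intervalIntegrable_two_mul_mul_sq hρ hw.continuousOn hw.isBigO_one_halfDiv hlog)
    (h.tendsto_radialPohozaev (hρ.1.trans hρ.2) hw.isBigO_one hlog)
    ((hderiv ρ hρ).continuousAt.tendsto.mono_left nhdsWithin_le_nhds)

end IsRadialSolution

end RadialSolutions

section HardyWeight

/-- The Hardy weight `a(r) = (1 - r²)⁻²` of the unit disc. -/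
def hardyWeight (r : ℝ) : ℝ := 1 / (1 - r ^ 2) ^ 2

/-- Half the divergence of the vector field `hardyWeight |x| • x` of the plane, as a function of
`r = |x|`. -/
def hardyWeightHalfDiv (r : ℝ) : ℝ := 1 / (1 - r ^ 2) ^ 2 + 2 * r ^ 2 / (1 - r ^ 2) ^ 3

variable {r : ℝ}

lemma continuousAt_hardyWeight (hr : 1 - r ^ 2 ≠ 0) : ContinuousAt hardyWeight r := by
  unfold hardyWeight
  fun_prop (disch := positivity)

lemma continuousAt_hardyWeightHalfDiv (hr : 1 - r ^ 2 ≠ 0) :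
    ContinuousAt hardyWeightHalfDiv r := by
  unfold hardyWeightHalfDiv
  fun_prop (disch := positivity)

lemma hasDerivAt_sq_mul_hardyWeight (hr : 1 - r ^ 2 ≠ 0) :
    HasDerivAt (fun s => s ^ 2 * hardyWeight s) (2 * r * hardyWeightHalfDiv r) r := by
  have hsq : HasDerivAt (fun s : ℝ => s ^ 2) (2 * r) r := by simpa using hasDerivAt_pow 2 r
  have hquot := hsq.div ((hsq.const_sub 1).pow 2) (pow_ne_zero 2 hr)
  refine (hquot.congr_deriv ?_).congr_of_eventuallyEq (.of_forall fun s => ?_)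
  · simp only [hardyWeightHalfDiv, Pi.pow_apply]
    field_simp
    ring
  · exact mul_one_div _ _

lemma isRadialWeight_hardyWeight : IsRadialWeight hardyWeight hardyWeightHalfDiv 1 := by
  have hne : ∀ r ∈ Ico (0 : ℝ) 1, 1 - r ^ 2 ≠ 0 := fun r hr =>
    (sub_pos.2 (pow_lt_one₀ hr.1 hr.2 two_ne_zero)).ne'
  have hzero : 1 - (0 : ℝ) ^ 2 ≠ 0 := hne 0 (left_mem_Ico.2 one_pos)
  exact {
    hasDerivAt := fun r hr => hasDerivAt_sq_mul_hardyWeight (hne r (Ioo_subset_Ico_self hr))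
    continuousOn := fun r hr =>
      (continuousAt_hardyWeightHalfDiv (hne r (Ioo_subset_Ico_self hr))).continuousWithinAt
    isBigO_one := ((continuousAt_hardyWeight hzero).mono_left nhdsWithin_le_nhds).isBigO_one ℝ
    isBigO_one_halfDiv :=
      ((continuousAt_hardyWeightHalfDiv hzero).mono_left nhdsWithin_le_nhds).isBigO_one ℝ }

end HardyWeight

theorem pohozaev_identity_green_general {a b G : ℝ → ℝ} {R c : ℝ} (hw : IsRadialWeight a b R)
    (hG : ContDiffOn ℝ 2 G (Ioo 0 R))
    (hODE : ∀ r ∈ Ioo 0 R, -(deriv (deriv G) r) - deriv G r / r = a r * G r)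
    (hlog : (fun r => G r + c * log r) =O[𝓝[>] 0] fun _ => (1 : ℝ)) :
    ∀ ρ ∈ Ioo 0 R,
      (∫ x in Metric.ball (0 : E2) ρ, b ‖x‖ * G ‖x‖ ^ 2)
        - π * ρ ^ 2 * deriv G ρ ^ 2 - π * a ρ * ρ ^ 2 * G ρ ^ 2 = -(π * c ^ 2) := by
  intro ρ hρ
  rw [setIntegral_ball_fun_norm_plane (fun r => b r * G r ^ 2) hρ.1.le,
    (IsRadialSolution.of_contDiffOn hG hODE).integral_two_mul_mul_sq hw hlog hρ, radialPohozaev]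
  ring

/-- Pohozaev-type identity for the radial Green's function of the Hardy operator.
If `G ∈ C²((0,1))` solves `−G'' − G'/r = G/(1−r²)²` on `(0,1)`, and
`G(r) + ln(r)/(2π)` and `r G'(r) + 1/(2π)` stay bounded as `r → 0⁺`, then for every
`ρ ∈ (0,1)`,
`∫_{B_ρ} [a(|x|) + 2|x|²/(1−|x|²)³] G(|x|)² dx − πρ²G'(ρ)² − πa(ρ)ρ²G(ρ)² = −1/(4π)`,
where `a(r) = (1−r²)^{−2}`. -/
theorem pohozaev_identity_green (G : ℝ → ℝ)
    (hG : ContDiffOn ℝ 2 G (Set.Ioo 0 1))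
    (hODE : ∀ r ∈ Set.Ioo (0 : ℝ) 1,
      -(deriv (deriv G) r) - deriv G r / r = G r / (1 - r ^ 2) ^ 2)
    (hb1 : ∃ M : ℝ, ∀ᶠ r in nhdsWithin 0 (Set.Ioi (0 : ℝ)),
      |G r + Real.log r / (2 * π)| ≤ M)
    (hb2 : ∃ M : ℝ, ∀ᶠ r in nhdsWithin 0 (Set.Ioi (0 : ℝ)),
      |r * deriv G r + 1 / (2 * π)| ≤ M) :
    ∀ ρ ∈ Set.Ioo (0 : ℝ) 1,
      (∫ x in Metric.ball (0 : E2) ρ,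
          (1 / (1 - ‖x‖ ^ 2) ^ 2 + 2 * ‖x‖ ^ 2 / (1 - ‖x‖ ^ 2) ^ 3) * (G ‖x‖) ^ 2)
        - π * ρ ^ 2 * (deriv G ρ) ^ 2
        - π * (1 / (1 - ρ ^ 2) ^ 2) * ρ ^ 2 * (G ρ) ^ 2 = -(1 / (4 * π)) := by
  have hlog : (fun r => G r + 1 / (2 * π) * log r) =O[𝓝[>] 0] fun _ => (1 : ℝ) :=
    (isBigO_one_iff ℝ).2 (by simpa only [IsBoundedUnder, IsBounded, eventually_map,
      one_div_mul_eq_div, norm_eq_abs] using hb1)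
  have hconst : π * (1 / (2 * π)) ^ 2 = 1 / (4 * π) := by
    field_simp
    norm_num
  rw [← hconst]
  refine pohozaev_identity_green_general isRadialWeight_hardyWeight hG (fun r hr => ?_) hlog
  rw [hODE r hr, hardyWeight, one_div_mul_eq_div]
end
end

section
/- The function ξ : ℝ² → ℝ defined by ξ(x) = −(1/(4π)) ln(1 + π|x|²) satisfies −Δξ(x) = e^{8π ξ(x)} for all x ∈ ℝ², and ∫_{ℝ²} e^{8π ξ(x)} dx = 1. -/
/-!
A function `g(‖x‖²)` on an `n`-dimensional space has Hessian
`2 g'(‖x‖²) ⟪v, w⟫ + 4 g''(‖x‖²) ⟪x, v⟫ ⟪x, w⟫`, so its Laplacian is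
`2 n g'(‖x‖²) + 4 ‖x‖² g''(‖x‖²)`. For `g(s) = log (1 + a s)` this is
`2 a (n + (n - 2) a ‖x‖²) / (1 + a ‖x‖²)²`. Precisely in dimension two the numerator is constant,
so that `Δ log ρ`, with `ρ = 1 + π ‖x‖²`, is a multiple of `ρ⁻² = e^{8πξ}`. The mass of `ρ⁻²` is
elementary in polar coordinates, where the area element supplies the factor `r` that makes
`r (1 + π r²)⁻²` an exact derivative.
-/

open MeasureTheory Real

noncomputable section

/-- The Laplacian of `f : ℝ² → ℝ`, as the sum of the pure second partial derivatives. -/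
def lap (f : E2 → ℝ) (x : E2) : ℝ :=
  ∑ i : Fin 2,
    iteratedFDeriv ℝ 2 f x ![EuclideanSpace.single i 1, EuclideanSpace.single i 1]

open Module Set Filter Topology InnerProductSpace Laplacian

section Radial

variable {E : Type*} [NormedAddCommGroup E] [InnerProductSpace ℝ E]

lemma hasFDerivAt_comp_norm_sq {g : ℝ → ℝ} {g' : ℝ} {x : E}
    (hg : HasDerivAt g g' (‖x‖ ^ 2)) :
    HasFDerivAt (fun y : E => g (‖y‖ ^ 2)) ((2 * g') • innerSL ℝ x) x := by
  refine (hg.comp_hasFDerivAt x (hasStrictFDerivAt_norm_sq x).hasFDerivAt).congr_fderiv ?_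
  rw [← Nat.cast_smul_eq_nsmul ℝ, Nat.cast_ofNat, smul_smul, mul_comm]

lemma iteratedFDeriv_two_comp_norm_sq {g g' : ℝ → ℝ} {g'' : ℝ} {x : E}
    (hg : ∀ᶠ s in 𝓝 (‖x‖ ^ 2), HasDerivAt g (g' s) s)
    (hg' : HasDerivAt g' g'' (‖x‖ ^ 2)) (v w : E) :
    iteratedFDeriv ℝ 2 (fun y : E => g (‖y‖ ^ 2)) x ![v, w]
      = 2 * g' (‖x‖ ^ 2) * inner ℝ v w + 4 * g'' * inner ℝ x v * inner ℝ x w := by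
  have gradient : fderiv ℝ (fun y : E => g (‖y‖ ^ 2))
      =ᶠ[𝓝 x] fun y => (2 * g' (‖y‖ ^ 2)) • innerSL ℝ y := by
    have hcont : ContinuousAt (fun y : E => ‖y‖ ^ 2) x := by fun_prop
    filter_upwards [hcont.eventually hg] with y hy
    exact (hasFDerivAt_comp_norm_sq hy).fderiv
  have hessian := ((hasFDerivAt_comp_norm_sq hg').const_mul 2).fun_smul
    (innerSL ℝ (E := E)).hasFDerivAt
  rw [iteratedFDeriv_two_apply, gradient.fderiv_eq, hessian.fderiv]
  change 2 * g' (‖x‖ ^ 2) * inner ℝ v w + 2 * (2 * g'' * inner ℝ x v) * inner ℝ x w = _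
  ring

lemma laplacian_comp_norm_sq [FiniteDimensional ℝ E] {g g' : ℝ → ℝ} {g'' : ℝ} {x : E}
    (hg : ∀ᶠ s in 𝓝 (‖x‖ ^ 2), HasDerivAt g (g' s) s)
    (hg' : HasDerivAt g' g'' (‖x‖ ^ 2)) :
    Δ (fun y : E => g (‖y‖ ^ 2)) x
      = 2 * finrank ℝ E * g' (‖x‖ ^ 2) + 4 * g'' * ‖x‖ ^ 2 := by
  let b := stdOrthonormalBasis ℝ E
  calc Δ (fun y : E => g (‖y‖ ^ 2)) x
    _ = ∑ i, (2 * g' (‖x‖ ^ 2) + 4 * g'' * inner ℝ x (b i) ^ 2) := by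
      rw [laplacian_eq_iteratedFDeriv_orthonormalBasis _ b]
      refine Finset.sum_congr rfl fun i _ => ?_
      rw [iteratedFDeriv_two_comp_norm_sq hg hg', real_inner_self_eq_norm_sq, b.norm_eq_one]
      ring
    _ = 2 * finrank ℝ E * g' (‖x‖ ^ 2) + 4 * g'' * ‖x‖ ^ 2 := by
      rw [Finset.sum_add_distrib, ← Finset.mul_sum _ _ (4 * g''), b.sum_sq_inner_left,
        Finset.sum_const, Finset.card_univ, Fintype.card_fin, nsmul_eq_mul]
      ring

lemma laplacian_log_one_add_mul_norm_sq [FiniteDimensional ℝ E] {a : ℝ} {x : E}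
    (hx : 1 + a * ‖x‖ ^ 2 ≠ 0) :
    Δ (fun y : E => log (1 + a * ‖y‖ ^ 2)) x
      = 2 * a * (finrank ℝ E + (finrank ℝ E - 2) * a * ‖x‖ ^ 2) / (1 + a * ‖x‖ ^ 2) ^ 2 := by
  have affine (s : ℝ) : HasDerivAt (fun s => 1 + a * s) a s := by
    simpa using ((hasDerivAt_id s).const_mul a).const_add 1
  have first : ∀ᶠ s in 𝓝 (‖x‖ ^ 2),
      HasDerivAt (fun s => log (1 + a * s)) (a / (1 + a * s)) s := by
    filter_upwards [(affine _).continuousAt.eventually_ne hx] with s hs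
    exact (affine s).log hs
  have second : HasDerivAt (fun s => a / (1 + a * s)) (-a ^ 2 / (1 + a * ‖x‖ ^ 2) ^ 2)
      (‖x‖ ^ 2) := by
    convert! (hasDerivAt_const _ a).fun_div (affine _) hx using 1
    ring
  rw [laplacian_comp_norm_sq first second]
  field_simp
  ring

end Radial

lemma integral_Ioi_mul_one_add_mul_sq_rpow_neg {a p : ℝ} (ha : 0 < a) (hp : 1 < p) :
    ∫ r in Ioi (0 : ℝ), r * (1 + a * r ^ 2) ^ (-p) = (2 * a * (p - 1))⁻¹ := by
  have hp' : 0 < p - 1 := sub_pos.2 hp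
  have hpos (r : ℝ) : 0 < 1 + a * r ^ 2 := by positivity
  let G (r : ℝ) : ℝ := -(2 * a * (p - 1))⁻¹ * (1 + a * r ^ 2) ^ (-(p - 1))
  have antideriv (r : ℝ) : HasDerivAt G (r * (1 + a * r ^ 2) ^ (-p)) r := by
    have base : HasDerivAt (fun r : ℝ => 1 + a * r ^ 2) (a * (2 * r)) r := by
      simpa using ((hasDerivAt_pow 2 r).const_mul a).const_add 1
    refine ((base.rpow_const (p := -(p - 1)) (.inl (hpos r).ne')).const_mul _).congr_deriv ?_
    rw [show -(p - 1) - 1 = -p by ring]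
    field_simp
  have decay : Tendsto G atTop (𝓝 0) := by
    have base : Tendsto (fun r : ℝ => 1 + a * r ^ 2) atTop atTop :=
      tendsto_atTop_add_const_left _ _ ((tendsto_pow_atTop two_ne_zero).const_mul_atTop ha)
    simpa [G] using ((tendsto_rpow_neg_atTop hp').comp base).const_mul (-(2 * a * (p - 1))⁻¹)
  rw [integral_Ioi_of_hasDerivAt_of_nonneg' (fun r _ => antideriv r)
    (fun r hr => mul_nonneg (mem_Ioi.1 hr).le (rpow_nonneg (hpos r).le _)) decay]
  simp [G]

section Plane

variable {E : Type*} [NormedAddCommGroup E] [InnerProductSpace ℝ E] [FiniteDimensional ℝ E]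
  [MeasurableSpace E] [BorelSpace E]

lemma integral_fun_norm_of_finrank_eq_two {F : Type*} [NormedAddCommGroup F] [NormedSpace ℝ F]
    (hE : finrank ℝ E = 2) (f : ℝ → F) :
    ∫ x : E, f ‖x‖ = (2 * π) • ∫ r in Ioi (0 : ℝ), r • f r := by
  have : Nontrivial E := nontrivial_of_finrank_pos (R := ℝ) (by lia)
  have disc_area : volume.real (Metric.ball (0 : E) 1) = π := by
    simp [measureReal_def, volume_ball_of_dim_even (E := E) (k := 1) hE, pi_nonneg]
  rw [integral_fun_norm_addHaar, disc_area, hE, ← Nat.cast_smul_eq_nsmul ℝ, smul_smul]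
  simp only [Nat.cast_ofNat, Nat.add_one_sub_one, pow_one]

lemma integral_one_add_mul_norm_sq_rpow_neg (hE : finrank ℝ E = 2) {a p : ℝ}
    (ha : 0 < a) (hp : 1 < p) :
    ∫ x : E, (1 + a * ‖x‖ ^ 2) ^ (-p) = π / (a * (p - 1)) := by
  rw [integral_fun_norm_of_finrank_eq_two hE fun r => (1 + a * r ^ 2) ^ (-p)]
  simp only [smul_eq_mul, integral_Ioi_mul_one_add_mul_sq_rpow_neg ha hp]
  field_simp

end Plane

section Bubble

variable {E : Type*} [NormedAddCommGroup E]

/-- The standard bubble `ξ`, a solution of Liouville's equation in dimension two; the formula needs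
only a norm. -/
def bubble (x : E) : ℝ := -(1 / (4 * π)) * log (1 + π * ‖x‖ ^ 2)

lemma exp_bubble (x : E) : exp (8 * π * bubble x) = (1 + π * ‖x‖ ^ 2) ^ (-2 : ℝ) := by
  rw [rpow_def_of_pos (by positivity), bubble]
  congr 1
  field_simp
  ring

variable [InnerProductSpace ℝ E] [FiniteDimensional ℝ E]

lemma neg_laplacian_bubble (hE : finrank ℝ E = 2) (x : E) :
    -Δ (bubble : E → ℝ) x = exp (8 * π * bubble x) := by
  have hρ : 0 < 1 + π * ‖x‖ ^ 2 := by positivity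
  have smooth : ContDiffAt ℝ 2 (fun y : E => log (1 + π * ‖y‖ ^ 2)) x :=
    (contDiffAt_const.add (contDiffAt_const.mul (contDiff_norm_sq ℝ).contDiffAt)).log hρ.ne'
  have scale : Δ (bubble : E → ℝ) x =
      -(1 / (4 * π)) * Δ (fun y : E => log (1 + π * ‖y‖ ^ 2)) x :=
    laplacian_smul (-(1 / (4 * π))) smooth
  rw [scale, laplacian_log_one_add_mul_norm_sq hρ.ne', hE, exp_bubble, rpow_neg hρ.le, rpow_two]
  field_simp
  norm_num

lemma integral_exp_bubble [MeasurableSpace E] [BorelSpace E] (hE : finrank ℝ E = 2) :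
    ∫ x : E, exp (8 * π * bubble x) = 1 := by
  simp only [exp_bubble]
  rw [integral_one_add_mul_norm_sq_rpow_neg hE pi_pos one_lt_two]
  field_simp
  norm_num

theorem bubble_solution_general [MeasurableSpace E] [BorelSpace E] (hE : finrank ℝ E = 2) :
    (∀ x, -Δ (bubble : E → ℝ) x = exp (8 * π * bubble x)) ∧
      ∫ x : E, exp (8 * π * bubble x) = 1 :=
  ⟨neg_laplacian_bubble hE, integral_exp_bubble hE⟩

end Bubble

lemma lap_eq_laplacian (f : E2 → ℝ) : lap f = Δ f := by
  funext x
  simp [lap, laplacian_eq_iteratedFDeriv_orthonormalBasis f (EuclideanSpace.basisFun (Fin 2) ℝ)]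

/-- The standard bubble `ξ(x) = −(1/(4π)) ln(1 + π|x|²)` (see (4.6)):
it satisfies `−Δξ = e^{8πξ}` on `ℝ²` and `∫_{ℝ²} e^{8πξ} dx = 1`. -/
theorem bubble_solution :
    (∀ x : E2,
      -(lap (fun y : E2 => -(1 / (4 * π)) * Real.log (1 + π * ‖y‖ ^ 2)) x)
        = Real.exp (8 * π * (-(1 / (4 * π)) * Real.log (1 + π * ‖x‖ ^ 2)))) ∧
    (∫ x : E2, Real.exp (8 * π * (-(1 / (4 * π)) * Real.log (1 + π * ‖x‖ ^ 2)))) = 1 := by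
  simpa only [lap_eq_laplacian] using! bubble_solution_general (E := E2) finrank_euclideanSpace_fin
end
end

section
/- For every integer n ≥ 2 and every u ∈ C_c^∞(Bⁿ), where Bⁿ is the open unit ball in ℝⁿ, one has ∫_{Bⁿ} |∇u|² dx ≥ ∫_{Bⁿ} u(x)²/(1−|x|²)² dx. -/
/-!
If `F` is a `C¹` vector field, expanding the square gives
`‖∇u + u F‖² = ‖∇u‖² + div (u² F) - u² (div F - ‖F‖²)`, and for compactly supported `u` the
divergence term integrates to zero, so `div F - ‖F‖²` is a Hardy weight. On the unit ball,
`F = x / (1 - ‖x‖²)`, minus the logarithmic gradient of `(1 - ‖x‖²)^{1/2}`, has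
`div F - ‖F‖² = 1 / (1 - ‖x‖²)² + (n - 1) / (1 - ‖x‖²)`.
-/

open MeasureTheory Real

noncomputable section

lemma tsupport_pow {X M₀ : Type*} [TopologicalSpace X] [MonoidWithZero M₀] [NoZeroDivisors M₀]
    (f : X → M₀) {n : ℕ} (hn : n ≠ 0) : tsupport (f ^ n) = tsupport f :=
  congrArg closure (Function.support_pow' f hn)

lemma contDiff_smul_of_tsupport {𝕜 E G : Type*} [NontriviallyNormedField 𝕜]
    [NormedAddCommGroup E] [NormedSpace 𝕜 E] [NormedAddCommGroup G] [NormedSpace 𝕜 G]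
    {n : WithTop ℕ∞} {f : E → 𝕜} {g : E → G} (hf : ContDiff 𝕜 n f)
    (hg : ∀ x ∈ tsupport f, ContDiffAt 𝕜 n g x) : ContDiff 𝕜 n (f • g) := by
  rw [← contMDiff_iff_contDiff]
  refine contMDiff_of_tsupport fun x hx => ?_
  rw [contMDiffAt_iff_contDiffAt]
  exact hf.contDiffAt.smul (hg x (tsupport_smul_subset_left f g hx))

section Divergence

variable {E : Type*} [NormedAddCommGroup E] [NormedSpace ℝ E]

/-- The divergence of a vector field, as the trace of its Fréchet derivative; this needs no
coordinates. It takes the value `0` at points where the field is not differentiable, and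
everywhere if `E` is infinite-dimensional. -/
def divergence (F : E → E) (x : E) : ℝ :=
  LinearMap.trace ℝ E (fderiv ℝ F x)

lemma divergence_of_notMem_tsupport {F : E → E} {x : E} (hx : x ∉ tsupport F) :
    divergence F x = 0 := by
  simp [divergence, fderiv_of_notMem_tsupport ℝ hx]

variable [FiniteDimensional ℝ E]

lemma divergence_id (x : E) : divergence id x = Module.finrank ℝ E := by
  simp [divergence]

lemma divergence_smul {f : E → ℝ} {F : E → E} {x : E} (hf : DifferentiableAt ℝ f x)
    (hF : DifferentiableAt ℝ F x) :
    divergence (f • F) x = fderiv ℝ f x (F x) + f x * divergence F x := by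
  simp only [divergence, fderiv_smul hf hF, ContinuousLinearMap.toLinearMap_add, map_add,
    ContinuousLinearMap.toLinearMap_smul, map_smul, smul_eq_mul]
  rw [add_comm]
  congr 1
  exact LinearMap.trace_smulRight (fderiv ℝ f x : E →ₗ[ℝ] ℝ) (F x)

/-- The trace as a continuous linear functional on continuous endomorphisms, so that it commutes
with Bochner integrals. -/
def traceCLM (E : Type*) [NormedAddCommGroup E] [NormedSpace ℝ E] [FiniteDimensional ℝ E] :
    (E →L[ℝ] E) →L[ℝ] ℝ :=
  (LinearMap.trace ℝ E ∘ₗ ContinuousLinearMap.coeLM ℝ).toContinuousLinearMap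

variable [MeasurableSpace E] {μ : Measure E}

lemma integrable_divergence {F : E → E} (hFi' : Integrable (fderiv ℝ F) μ) :
    Integrable (divergence F) μ :=
  (traceCLM E).integrable_comp hFi'

variable [BorelSpace E] [μ.IsAddHaarMeasure]

lemma integral_fderiv_eq_zero {G : Type*} [NormedAddCommGroup G] [NormedSpace ℝ G]
    {f : E → G} (hf : Differentiable ℝ f) (hfi : Integrable f μ)
    (hfi' : Integrable (fderiv ℝ f) μ) : ∫ x, fderiv ℝ f x ∂μ = 0 := by
  ext v
  have hparts := integral_smul_fderiv_eq_neg_fderiv_smul_of_integrable (μ := μ) (v := v)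
    (f := fun _ : E => (1 : ℝ)) (g := f) (by simp)
    (by simpa using hfi'.apply_continuousLinearMap v) (by simpa using hfi)
    (fun _ _ => differentiableAt_const _) (fun x _ => hf x)
  simpa [ContinuousLinearMap.integral_apply hfi'] using hparts

lemma integral_divergence_eq_zero {F : E → E} (hF : Differentiable ℝ F) (hFi : Integrable F μ)
    (hFi' : Integrable (fderiv ℝ F) μ) : ∫ x, divergence F x ∂μ = 0 :=
  calc ∫ x, divergence F x ∂μ = traceCLM E (∫ x, fderiv ℝ F x ∂μ) :=
        (traceCLM E).integral_comp_comm hFi'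
    _ = 0 := by rw [integral_fderiv_eq_zero hF hFi hFi', map_zero]

end Divergence

section Hardy

variable {E : Type*} [NormedAddCommGroup E] [InnerProductSpace ℝ E]

section Gradient

variable [CompleteSpace E]

lemma gradient_of_notMem_tsupport {u : E → ℝ} {x : E} (hx : x ∉ tsupport u) :
    gradient u x = 0 := by
  simp [gradient, fderiv_of_notMem_tsupport ℝ hx]

lemma norm_gradient (u : E → ℝ) (x : E) : ‖gradient u x‖ = ‖fderiv ℝ u x‖ :=
  (InnerProductSpace.toDual ℝ E).symm.norm_map _

lemma integrable_norm_gradient_sq [MeasurableSpace E] [OpensMeasurableSpace E] {μ : Measure E}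
    [IsFiniteMeasureOnCompacts μ] {u : E → ℝ} (hu : ContDiff ℝ 1 u)
    (hcomp : HasCompactSupport u) : Integrable (fun x => ‖gradient u x‖ ^ 2) μ := by
  simp_rw [norm_gradient]
  have hcont : Continuous (fun x => ‖fderiv ℝ u x‖ ^ 2) :=
    (hu.continuous_fderiv one_ne_zero).norm.pow 2
  have hsupp : HasCompactSupport (fun x => ‖fderiv ℝ u x‖ ^ 2) :=
    (hcomp.fderiv ℝ).mono fun x hx h => hx (by simp [h])
  exact hcont.integrable_of_hasCompactSupport hsupp

end Gradient

variable [FiniteDimensional ℝ E]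

lemma norm_gradient_add_smul_sq {u : E → ℝ} {F : E → E} {x : E} (hu : DifferentiableAt ℝ u x)
    (hF : DifferentiableAt ℝ F x) :
    ‖gradient u x + u x • F x‖ ^ 2 =
      ‖gradient u x‖ ^ 2 + divergence (u ^ 2 • F) x
        - u x ^ 2 * (divergence F x - ‖F x‖ ^ 2) := by
  have hdiv : divergence (u ^ 2 • F) x =
      2 * u x * inner ℝ (gradient u x) (F x) + u x ^ 2 * divergence F x := by
    rw [divergence_smul (hu.pow 2) hF, fderiv_pow 2 hu, inner_gradient_left]
    simp
  rw [hdiv, norm_add_sq_real, inner_smul_right, norm_smul, mul_pow, norm_eq_abs, sq_abs]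
  ring

lemma sq_mul_le_norm_gradient_sq_add_divergence {u : E → ℝ} {F : E → E} {x : E} {w : ℝ}
    (hu : DifferentiableAt ℝ u x) (hF : DifferentiableAt ℝ F x)
    (hw : w ≤ divergence F x - ‖F x‖ ^ 2) :
    u x ^ 2 * w ≤ ‖gradient u x‖ ^ 2 + divergence (u ^ 2 • F) x := by
  have hsq : 0 ≤ ‖gradient u x + u x • F x‖ ^ 2 := sq_nonneg _
  rw [norm_gradient_add_smul_sq hu hF] at hsq
  linarith [mul_le_mul_of_nonneg_left hw (sq_nonneg (u x))]

variable [MeasurableSpace E] [BorelSpace E] (μ : Measure E) [μ.IsAddHaarMeasure]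

theorem integral_sq_mul_le_integral_norm_gradient_sq {u W : E → ℝ} {F : E → E}
    (hu : ContDiff ℝ 1 u) (hcomp : HasCompactSupport u)
    (hF : ∀ x ∈ tsupport u, ContDiffAt ℝ 1 F x) (hW_nonneg : ∀ x ∈ tsupport u, 0 ≤ W x)
    (hW_le : ∀ x ∈ tsupport u, W x ≤ divergence F x - ‖F x‖ ^ 2) :
    ∫ x, u x ^ 2 * W x ∂μ ≤ ∫ x, ‖gradient u x‖ ^ 2 ∂μ := by
  have htsupport : tsupport (u ^ 2 • F) ⊆ tsupport u :=
    (tsupport_smul_subset_left (u ^ 2) F).trans_eq (tsupport_pow u two_ne_zero)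
  have hdiff : ContDiff ℝ 1 (u ^ 2 • F) := contDiff_smul_of_tsupport (hu.pow 2) fun x hx =>
    hF x (by rwa [tsupport_pow u two_ne_zero] at hx)
  have hcomp' : HasCompactSupport (u ^ 2 • F) :=
    hcomp.of_isClosed_subset (isClosed_tsupport _) htsupport
  have hfield : Integrable (u ^ 2 • F) μ := hdiff.continuous.integrable_of_hasCompactSupport hcomp'
  have hfield' : Integrable (fderiv ℝ (u ^ 2 • F)) μ :=
    (hdiff.continuous_fderiv one_ne_zero).integrable_of_hasCompactSupport (hcomp'.fderiv ℝ)
  have hgrad : Integrable (fun x => ‖gradient u x‖ ^ 2) μ := integrable_norm_gradient_sq hu hcomp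
  have hdiv : Integrable (divergence (u ^ 2 • F)) μ := integrable_divergence hfield'
  have hnonneg (x : E) : 0 ≤ u x ^ 2 * W x := by
    by_cases hx : x ∈ tsupport u
    · exact mul_nonneg (sq_nonneg _) (hW_nonneg x hx)
    · simp [image_eq_zero_of_notMem_tsupport hx]
  have hle (x : E) : u x ^ 2 * W x ≤ ‖gradient u x‖ ^ 2 + divergence (u ^ 2 • F) x := by
    by_cases hx : x ∈ tsupport u
    · exact sq_mul_le_norm_gradient_sq_add_divergence (hu.differentiable one_ne_zero x)
        ((hF x hx).differentiableAt one_ne_zero) (hW_le x hx)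
    · rw [divergence_of_notMem_tsupport fun h => hx (htsupport h),
        image_eq_zero_of_notMem_tsupport hx]
      simp
  calc ∫ x, u x ^ 2 * W x ∂μ
      ≤ ∫ x, (‖gradient u x‖ ^ 2 + divergence (u ^ 2 • F) x) ∂μ :=
        integral_mono_of_nonneg (.of_forall hnonneg) (hgrad.add hdiv) (.of_forall hle)
    _ = ∫ x, ‖gradient u x‖ ^ 2 ∂μ := by
        rw [integral_add hgrad hdiv,
          integral_divergence_eq_zero (hdiff.differentiable one_ne_zero) hfield hfield', add_zero]

end Hardy

section Ball

variable {E : Type*} [NormedAddCommGroup E] [InnerProductSpace ℝ E]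

/-- The vector field `x / (1 - ‖x‖²)`, minus the logarithmic gradient of the positive function
`(1 - ‖x‖²)^{1/2}` on the unit ball. -/
def ballField (x : E) : E := (1 - ‖x‖ ^ 2)⁻¹ • x

lemma contDiffAt_ballField {x : E} {n : WithTop ℕ∞} (hx : 1 - ‖x‖ ^ 2 ≠ 0) :
    ContDiffAt ℝ n ballField x :=
  ((contDiffAt_const.sub (contDiff_norm_sq ℝ).contDiffAt).inv hx).smul contDiffAt_id

lemma hasFDerivAt_inv_one_sub_norm_sq {x : E} (hx : 1 - ‖x‖ ^ 2 ≠ 0) :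
    HasFDerivAt (fun y : E => (1 - ‖y‖ ^ 2)⁻¹)
      ((2 / (1 - ‖x‖ ^ 2) ^ 2) • innerSL ℝ x) x := by
  have h := (hasDerivAt_inv hx).comp_hasFDerivAt x
    ((hasStrictFDerivAt_norm_sq x).hasFDerivAt.const_sub 1)
  refine h.congr_fderiv ?_
  ext v
  simp only [smul_neg, neg_smul, neg_neg, smul_apply, coe_innerSL_apply, nsmul_eq_mul,
    Nat.cast_ofNat, smul_eq_mul]
  ring

variable [FiniteDimensional ℝ E]

lemma divergence_ballField {x : E} (hx : 1 - ‖x‖ ^ 2 ≠ 0) :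
    divergence ballField x =
      Module.finrank ℝ E / (1 - ‖x‖ ^ 2) + 2 * ‖x‖ ^ 2 / (1 - ‖x‖ ^ 2) ^ 2 := by
  have hinv := hasFDerivAt_inv_one_sub_norm_sq hx
  have hdiv := divergence_smul hinv.differentiableAt (differentiableAt_id (x := x))
  rw [divergence_id, hinv.fderiv] at hdiv
  refine hdiv.trans ?_
  simp only [id_eq, smul_apply, coe_innerSL_apply, inner_self_eq_norm_sq_to_K, ringHom_apply,
    smul_eq_mul]
  ring

lemma divergence_ballField_sub_norm_sq {x : E} (hx : 1 - ‖x‖ ^ 2 ≠ 0) :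
    divergence ballField x - ‖ballField x‖ ^ 2 =
      ((1 - ‖x‖ ^ 2) ^ 2)⁻¹ + (Module.finrank ℝ E - 1) / (1 - ‖x‖ ^ 2) := by
  rw [divergence_ballField hx, ballField, norm_smul, mul_pow, norm_eq_abs, sq_abs]
  field_simp
  ring

theorem hardy_inequality_ball_general [Nontrivial E] [MeasurableSpace E] [BorelSpace E]
    (μ : Measure E) [μ.IsAddHaarMeasure] {u : E → ℝ} (hu : ContDiff ℝ 1 u)
    (hsupp : tsupport u ⊆ Metric.ball (0 : E) 1) :
    ∫ x in Metric.ball (0 : E) 1, u x ^ 2 / (1 - ‖x‖ ^ 2) ^ 2 ∂μ ≤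
      ∫ x in Metric.ball (0 : E) 1, ‖gradient u x‖ ^ 2 ∂μ := by
  have hcomp : HasCompactSupport u := Metric.isCompact_of_isClosed_isBounded
    (isClosed_tsupport u) (Metric.isBounded_ball.subset hsupp)
  have hpos : ∀ x ∈ tsupport u, 0 < 1 - ‖x‖ ^ 2 := fun x hx =>
    sub_pos.2 ((sq_lt_one_iff₀ (norm_nonneg x)).2 (mem_ball_zero_iff.1 (hsupp hx)))
  have hfinrank : (1 : ℝ) ≤ Module.finrank ℝ E := by
    exact_mod_cast Module.finrank_pos (R := ℝ) (M := E)
  have hzero : ∀ x ∉ Metric.ball (0 : E) 1, u x = 0 ∧ gradient u x = 0 := fun x hx =>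
    have hx' : x ∉ tsupport u := fun h => hx (hsupp h)
    ⟨image_eq_zero_of_notMem_tsupport hx', gradient_of_notMem_tsupport hx'⟩
  rw [setIntegral_eq_integral_of_forall_compl_eq_zero (fun x hx => by simp [hzero x hx]),
    setIntegral_eq_integral_of_forall_compl_eq_zero (fun x hx => by simp [hzero x hx])]
  simp_rw [div_eq_mul_inv]
  refine integral_sq_mul_le_integral_norm_gradient_sq μ (F := ballField) hu hcomp
    (fun x hx => contDiffAt_ballField (hpos x hx).ne') (fun x _ => by positivity) fun x hx => ?_
  rw [divergence_ballField_sub_norm_sq (hpos x hx).ne']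
  exact le_add_of_nonneg_right (div_nonneg (sub_nonneg.2 hfinrank) (hpos x hx).le)

end Ball

/-- The Hardy inequality on the unit ball `Bⁿ ⊆ ℝⁿ`, `n ≥ 2`:
`∫_{Bⁿ} |∇u|² ≥ ∫_{Bⁿ} u²/(1−|x|²)²` for every `u ∈ C_c^∞(Bⁿ)`. -/
theorem hardy_inequality_ball (n : ℕ) (hn : 2 ≤ n)
    (u : EuclideanSpace ℝ (Fin n) → ℝ)
    (hsmooth : ContDiff ℝ (⊤ : ℕ∞) u) (hcomp : HasCompactSupport u)
    (hsupp : tsupport u ⊆ Metric.ball (0 : EuclideanSpace ℝ (Fin n)) 1) :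
    (∫ x in Metric.ball (0 : EuclideanSpace ℝ (Fin n)) 1, ‖gradient u x‖ ^ 2) ≥
      ∫ x in Metric.ball (0 : EuclideanSpace ℝ (Fin n)) 1,
        (u x) ^ 2 / (1 - ‖x‖ ^ 2) ^ 2 := by
  have : Nonempty (Fin n) := ⟨⟨0, by omega⟩⟩
  exact hardy_inequality_ball_general volume (hsmooth.of_le (by exact_mod_cast le_top)) hsupp
end
end

section
/- For every λ > 1, the infimum over u ∈ C_c^∞(B) of ∫_B |∇u|² dx − λ ∫_B u(x)²/(1−|x|²)² dx equals −∞; that is, for every M > 0 there exists u ∈ C_c^∞(B) with ∫_B |∇u|² dx − λ ∫_B u(x)²/(1−|x|²)² dx < −M. -/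
open MeasureTheory Real Filter

noncomputable section

/-!
On the disc, `s = 1 - |x|²` pushes area forward to `vol B` times the length on `(0, 1)`. For
`u(x) = g(1 - |x|²)` the weighted mass `∫ u² / (1 - |x|²)²` becomes `vol B * ∫ g² / s²`, while
`|∇u|² = 4 (1 - s) g'² ≤ 4 g'²`. This is the one-dimensional Hardy inequality, which
`g(s) = √s φ(log s)` turns into `4 ∫ g'² - ∫ g² / s² = 4 ∫ φ'²`, the cross term `∫ φ φ'` being
zero. So the functional is at most `vol B * (4 ∫ φ'² - (λ - 1) ∫ φ²)`, and stretching `φ` by a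
factor `n` divides the first integral by `n` and multiplies the second by `n`.
-/

lemma hasCompactSupport_pow {X R : Type*} [TopologicalSpace X] [MonoidWithZero R] {f : X → R}
    (hf : HasCompactSupport f) {n : ℕ} (hn : n ≠ 0) : HasCompactSupport fun x => f x ^ n :=
  hf.comp_left (g := (· ^ n)) (zero_pow hn)

section Radial

variable {E : Type*}

section Integral

variable [NormedAddCommGroup E] [NormedSpace ℝ E] [MeasurableSpace E] [BorelSpace E]
  (μ : Measure E) [μ.IsAddHaarMeasure] {F : Type*} [NormedAddCommGroup F] [NormedSpace ℝ F]

lemma integral_comp_norm_sq (hE : Module.finrank ℝ E = 2) (f : ℝ → F) :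
    ∫ x, f (‖x‖ ^ 2) ∂μ = μ.real (Metric.ball 0 1) • ∫ s in Set.Ioi 0, f s := by
  have : FiniteDimensional ℝ E := Module.finite_of_finrank_pos (by simp [hE])
  have : Nontrivial E := Module.nontrivial_of_finrank_pos (R := ℝ) (by simp [hE])
  have substitution : ∫ s in Set.Ioi 0, f s = (2 : ℝ) • ∫ r in Set.Ioi (0 : ℝ), r • f (r ^ 2) := by
    rw [← integral_comp_rpow_Ioi f two_ne_zero, ← integral_smul]
    norm_num [smul_smul]
  rw [integral_fun_norm_addHaar μ fun r => f (r ^ 2), substitution, hE, smul_comm]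
  simp [two_smul]

lemma setIntegral_ball_comp_one_sub_norm_sq (hE : Module.finrank ℝ E = 2) (f : ℝ → F) :
    ∫ x in Metric.ball (0 : E) 1, f (1 - ‖x‖ ^ 2) ∂μ =
      μ.real (Metric.ball 0 1) • ∫ s in Set.Ioo 0 1, f s := by
  have ball_eq : Metric.ball (0 : E) 1 = (‖·‖ ^ 2) ⁻¹' Set.Iio 1 := by
    ext x
    simp
  have reflection : ∫ s in Set.Ioo (0 : ℝ) 1, f (1 - s) = ∫ s in Set.Ioo (0 : ℝ) 1, f s := by
    simpa [intervalIntegral.integral_of_le, integral_Ioc_eq_integral_Ioo] using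
      intervalIntegral.integral_comp_sub_left f 1 (a := 0) (b := 1)
  calc ∫ x in Metric.ball (0 : E) 1, f (1 - ‖x‖ ^ 2) ∂μ
      = ∫ x, (Set.Iio 1).indicator (fun s => f (1 - s)) (‖x‖ ^ 2) ∂μ := by
        rw [← integral_indicator measurableSet_ball, ball_eq]
        rfl
    _ = μ.real (Metric.ball 0 1) • ∫ s in Set.Ioo 0 1, f s := by
        rw [integral_comp_norm_sq μ hE, setIntegral_indicator measurableSet_Iio,
          Set.Ioi_inter_Iio, reflection]

lemma setIntegral_ball_sq_div_sq_comp_one_sub_norm_sq (hE : Module.finrank ℝ E = 2) {g : ℝ → ℝ}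
    (hg : Function.support g ⊆ Set.Iio 1) :
    ∫ x in Metric.ball (0 : E) 1, g (1 - ‖x‖ ^ 2) ^ 2 / (1 - ‖x‖ ^ 2) ^ 2 ∂μ =
      μ.real (Metric.ball 0 1) * ∫ s in Set.Ioi 0, g s ^ 2 / s ^ 2 := by
  rw [setIntegral_ball_comp_one_sub_norm_sq μ hE fun s => g s ^ 2 / s ^ 2, smul_eq_mul]
  congr 1
  refine (setIntegral_eq_of_subset_of_forall_sdiff_eq_zero measurableSet_Ioi
    Set.Ioo_subset_Ioi_self fun s hs => ?_).symm
  have : g s = 0 := Function.notMem_support.1 fun h => hs.2 ⟨hs.1, hg h⟩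
  simp [this]

end Integral

variable [NormedAddCommGroup E] [InnerProductSpace ℝ E] [CompleteSpace E]

lemma hasGradientAt_comp_one_sub_norm_sq {g : ℝ → ℝ} {g' : ℝ} {x : E}
    (hg : HasDerivAt g g' (1 - ‖x‖ ^ 2)) :
    HasGradientAt (fun y => g (1 - ‖y‖ ^ 2)) (-(2 * g') • x) x := by
  rw [hasGradientAt_iff_hasFDerivAt]
  have hcomp : HasFDerivAt (fun y => g (1 - ‖y‖ ^ 2)) (g' • -((2 : ℕ) • innerSL ℝ x)) x :=
    hg.comp_hasFDerivAt x ((hasStrictFDerivAt_norm_sq x).hasFDerivAt.const_sub 1)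
  refine hcomp.congr_fderiv ?_
  ext y
  simp
  ring

lemma norm_gradient_sq_comp_one_sub_norm_sq {g : ℝ → ℝ} {x : E}
    (hg : DifferentiableAt ℝ g (1 - ‖x‖ ^ 2)) :
    ‖gradient (fun y => g (1 - ‖y‖ ^ 2)) x‖ ^ 2 = 4 * ‖x‖ ^ 2 * deriv g (1 - ‖x‖ ^ 2) ^ 2 := by
  rw [(hasGradientAt_comp_one_sub_norm_sq hg.hasDerivAt).gradient, norm_smul, mul_pow,
    Real.norm_eq_abs, sq_abs]
  ring

lemma setIntegral_ball_norm_gradient_sq_comp_one_sub_norm_sq_le [MeasurableSpace E] [BorelSpace E]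
    (μ : Measure E) [μ.IsAddHaarMeasure] (hE : Module.finrank ℝ E = 2) {g : ℝ → ℝ}
    (hg : ContDiff ℝ 1 g) (hgc : HasCompactSupport g) :
    ∫ x in Metric.ball (0 : E) 1, ‖gradient (fun y => g (1 - ‖y‖ ^ 2)) x‖ ^ 2 ∂μ ≤
      μ.real (Metric.ball 0 1) * (4 * ∫ s in Set.Ioi 0, deriv g s ^ 2) := by
  have energy_eq : ∫ x in Metric.ball (0 : E) 1, ‖gradient (fun y => g (1 - ‖y‖ ^ 2)) x‖ ^ 2 ∂μ =
      μ.real (Metric.ball 0 1) * ∫ s in Set.Ioo 0 1, 4 * (1 - s) * deriv g s ^ 2 := by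
    rw [← smul_eq_mul, ← setIntegral_ball_comp_one_sub_norm_sq μ hE]
    simp only [norm_gradient_sq_comp_one_sub_norm_sq (hg.differentiable one_ne_zero _),
      sub_sub_cancel]
  have hcont : Continuous (deriv g) := hg.continuous_deriv_one
  have int_full : Integrable fun s => 4 * deriv g s ^ 2 :=
    (continuous_const.mul (hcont.pow 2)).integrable_of_hasCompactSupport
      (hasCompactSupport_pow hgc.deriv two_ne_zero).mul_left
  have int_weighted : Integrable fun s => 4 * (1 - s) * deriv g s ^ 2 :=
    (by fun_prop : Continuous _).integrable_of_hasCompactSupport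
      (hasCompactSupport_pow hgc.deriv two_ne_zero).mul_left
  rw [energy_eq, ← integral_const_mul 4]
  refine mul_le_mul_of_nonneg_left ?_ measureReal_nonneg
  calc ∫ s in Set.Ioo 0 1, 4 * (1 - s) * deriv g s ^ 2
      ≤ ∫ s in Set.Ioo 0 1, 4 * deriv g s ^ 2 := by
        refine setIntegral_mono_on int_weighted.integrableOn int_full.integrableOn
          measurableSet_Ioo fun s hs => ?_
        nlinarith [hs.1, sq_nonneg (deriv g s)]
    _ ≤ ∫ s in Set.Ioi 0, 4 * deriv g s ^ 2 :=
        setIntegral_mono_set int_full.integrableOn (.of_forall fun s => by positivity)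
          Set.Ioo_subset_Ioi_self.eventuallyLE

lemma isTest_comp_one_sub_norm_sq {g : ℝ → ℝ} (hg : ContDiff ℝ (⊤ : ℕ∞) g)
    (hpos : tsupport g ⊆ Set.Ioi 0) : IsTest fun x => g (1 - ‖x‖ ^ 2) := by
  have hsupp : tsupport (fun x : E2 => g (1 - ‖x‖ ^ 2)) ⊆ B2 := fun x hx => by
    have : 0 < 1 - ‖x‖ ^ 2 :=
      hpos (tsupport_comp_subset_preimage g (f := fun x : E2 => 1 - ‖x‖ ^ 2) (by fun_prop) hx)
    simpa [B2] using this
  refine ⟨hg.comp (contDiff_const.sub (contDiff_norm_sq ℝ)), ?_, hsupp⟩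
  exact (isCompact_closedBall 0 1).of_isClosed_subset (isClosed_tsupport _)
    (hsupp.trans Metric.ball_subset_closedBall)

end Radial

section EmdenFowler

lemma setIntegral_Ioi_eq_integral_exp_smul {F : Type*} [NormedAddCommGroup F] [NormedSpace ℝ F]
    (f : ℝ → F) : ∫ s in Set.Ioi 0, f s = ∫ t, exp t • f (exp t) := by
  simpa [Real.range_exp] using integral_image_eq_integral_deriv_smul_of_monotoneOn .univ
    (fun t _ => (Real.hasDerivAt_exp t).hasDerivWithinAt) (exp_monotone.monotoneOn _) f

/-- The Emden–Fowler change of variables `s = exp t`, which turns the Hardy inequality on the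
half-line into an inequality with constant coefficients on `ℝ`. It vanishes for `s ≤ 0`, where
`√s = 0`. -/
def emdenFowler (φ : ℝ → ℝ) (s : ℝ) : ℝ := √s * φ (log s)

variable {φ : ℝ → ℝ}

lemma tsupport_emdenFowler_subset (hφ : HasCompactSupport φ) :
    tsupport (emdenFowler φ) ⊆ exp '' tsupport φ := by
  refine closure_minimal (fun s hs => ?_) (hφ.isCompact.image continuous_exp).isClosed
  have hs₀ : √s ≠ 0 ∧ φ (log s) ≠ 0 := mul_ne_zero_iff.1 hs
  exact ⟨log s, subset_tsupport φ hs₀.2, exp_log (Real.sqrt_ne_zero'.1 hs₀.1)⟩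

lemma tsupport_emdenFowler_subset_Ioi (hφ : HasCompactSupport φ) :
    tsupport (emdenFowler φ) ⊆ Set.Ioi 0 :=
  (tsupport_emdenFowler_subset hφ).trans (Set.image_subset_iff.2 fun t _ => exp_pos t)

lemma support_emdenFowler_subset_Iio (hφ : Function.support φ ⊆ Set.Iio 0) :
    Function.support (emdenFowler φ) ⊆ Set.Iio 1 := fun s hs => by
  have hs₀ : √s ≠ 0 ∧ φ (log s) ≠ 0 := mul_ne_zero_iff.1 hs
  exact (Real.log_neg_iff (Real.sqrt_ne_zero'.1 hs₀.1)).1 (hφ hs₀.2)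

lemma hasCompactSupport_emdenFowler (hφ : HasCompactSupport φ) :
    HasCompactSupport (emdenFowler φ) :=
  (hφ.isCompact.image continuous_exp).of_isClosed_subset (isClosed_tsupport _)
    (tsupport_emdenFowler_subset hφ)

lemma contDiff_emdenFowler {n : WithTop ℕ∞} (hφ : ContDiff ℝ n φ) (hc : HasCompactSupport φ) :
    ContDiff ℝ n (emdenFowler φ) := by
  refine contDiff_iff_contDiffAt.2 fun s => ?_
  by_cases hs : s ∈ tsupport (emdenFowler φ)
  · have hs₀ : s ≠ 0 := (tsupport_emdenFowler_subset_Ioi hc hs).ne'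
    exact (Real.contDiffAt_sqrt hs₀).mul (hφ.contDiffAt.comp s (Real.contDiffAt_log.2 hs₀))
  · exact contDiffAt_const.congr_of_eventuallyEq (notMem_tsupport_iff_eventuallyEq.1 hs)

lemma hasDerivAt_emdenFowler_exp {φ' t : ℝ} (hφ : HasDerivAt φ φ' t) :
    HasDerivAt (emdenFowler φ) ((φ t / 2 + φ') / √(exp t)) (exp t) := by
  have hφ_log : HasDerivAt (fun s => φ (log s)) (φ' * (exp t)⁻¹) (exp t) :=
    HasDerivAt.comp (exp t) (by rwa [log_exp]) (Real.hasDerivAt_log (exp_ne_zero t))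
  have hsqrt : √(exp t) ≠ 0 := (Real.sqrt_pos.2 (exp_pos t)).ne'
  have hsq : exp t = √(exp t) ^ 2 := (Real.sq_sqrt (exp_pos t).le).symm
  refine ((Real.hasDerivAt_sqrt (exp_ne_zero t)).mul hφ_log).congr_deriv ?_
  rw [log_exp]
  field_simp
  rw [← hsq]
  field_simp

lemma setIntegral_emdenFowler_sq_div_sq (φ : ℝ → ℝ) :
    ∫ s in Set.Ioi 0, emdenFowler φ s ^ 2 / s ^ 2 = ∫ t, φ t ^ 2 := by
  rw [setIntegral_Ioi_eq_integral_exp_smul]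
  congr 1 with t
  rw [emdenFowler, log_exp, mul_pow, Real.sq_sqrt (exp_pos t).le, smul_eq_mul]
  field_simp

lemma integral_add_mul_deriv_sq (hφ : ContDiff ℝ 1 φ) (hc : HasCompactSupport φ) (a : ℝ) :
    ∫ t, (φ t + a * deriv φ t) ^ 2 = (∫ t, φ t ^ 2) + a ^ 2 * ∫ t, deriv φ t ^ 2 := by
  have hcont : Continuous φ := hφ.continuous
  have hcont' : Continuous (deriv φ) := hφ.continuous_deriv_one
  have int_sq : Integrable fun t => φ t ^ 2 :=
    (hcont.pow 2).integrable_of_hasCompactSupport (hasCompactSupport_pow hc two_ne_zero)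
  have int_deriv_sq : Integrable fun t => deriv φ t ^ 2 :=
    (hcont'.pow 2).integrable_of_hasCompactSupport
      (hasCompactSupport_pow hc.deriv two_ne_zero)
  have int_cross : Integrable fun t => 2 * φ t * deriv φ t :=
    (by fun_prop : Continuous _).integrable_of_hasCompactSupport hc.deriv.mul_left
  have int_add : Integrable fun t => φ t ^ 2 + a * (2 * φ t * deriv φ t) :=
    int_sq.add (int_cross.const_mul a)
  have hasDerivAt_sq (t : ℝ) : HasDerivAt (fun t => φ t ^ 2) (2 * φ t * deriv φ t) t := by
    simpa using (hφ.differentiable one_ne_zero t).hasDerivAt.fun_pow 2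
  have cross_eq_zero : ∫ t, 2 * φ t * deriv φ t = 0 :=
    integral_eq_zero_of_hasDerivAt_of_integrable hasDerivAt_sq int_cross int_sq
  calc ∫ t, (φ t + a * deriv φ t) ^ 2
      = ∫ t, (φ t ^ 2 + a * (2 * φ t * deriv φ t)) + a ^ 2 * deriv φ t ^ 2 := by
        congr 1 with t
        ring
    _ = (∫ t, φ t ^ 2) + a ^ 2 * ∫ t, deriv φ t ^ 2 := by
        rw [integral_add int_add (int_deriv_sq.const_mul _),
          integral_add int_sq (int_cross.const_mul a), integral_const_mul, integral_const_mul,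
          cross_eq_zero, mul_zero, add_zero]

lemma four_mul_setIntegral_deriv_emdenFowler_sq (hφ : ContDiff ℝ 1 φ) (hc : HasCompactSupport φ) :
    4 * ∫ s in Set.Ioi 0, deriv (emdenFowler φ) s ^ 2 =
      (∫ t, φ t ^ 2) + 4 * ∫ t, deriv φ t ^ 2 := by
  have pointwise (t : ℝ) : 4 * (exp t * deriv (emdenFowler φ) (exp t) ^ 2) =
      (φ t + 2 * deriv φ t) ^ 2 := by
    rw [(hasDerivAt_emdenFowler_exp (hφ.differentiable one_ne_zero t).hasDerivAt).deriv, div_pow,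
      Real.sq_sqrt (exp_pos t).le]
    field_simp
    ring
  rw [setIntegral_Ioi_eq_integral_exp_smul, ← integral_const_mul]
  simp only [smul_eq_mul, pointwise]
  rw [integral_add_mul_deriv_sq hφ hc]
  norm_num

end EmdenFowler

section Dilation

lemma integral_deriv_comp_div_sq (ψ : ℝ → ℝ) (n : ℝ) :
    ∫ t, deriv (fun t => ψ (t / n)) t ^ 2 = |n|⁻¹ * ∫ t, deriv ψ t ^ 2 := by
  have deriv_eq (t : ℝ) : deriv (fun t => ψ (t / n)) t = n⁻¹ * deriv ψ (t / n) := by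
    simpa [div_eq_inv_mul] using deriv_comp_mul_left n⁻¹ ψ t
  simp only [deriv_eq, mul_pow, integral_const_mul]
  rw [Measure.integral_comp_div (fun t => deriv ψ t ^ 2), smul_eq_mul, ← sq_abs, abs_inv]
  field_simp

lemma tendsto_integral_comp_div_atBot {ψ : ℝ → ℝ} (hψ : 0 < ∫ t, ψ t ^ 2) (a : ℝ) {c : ℝ}
    (hc : 0 < c) :
    Tendsto (fun n => a * (∫ t, deriv (fun t => ψ (t / n)) t ^ 2) - c * ∫ t, ψ (t / n) ^ 2)
      atTop atBot := by
  have energy_tendsto : Tendsto (fun n : ℝ => a * (n⁻¹ * ∫ t, deriv ψ t ^ 2)) atTop (nhds 0) := by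
    simpa using (tendsto_inv_atTop_zero.mul_const (∫ t, deriv ψ t ^ 2)).const_mul a
  have mass_tendsto : Tendsto (fun n : ℝ => -(c * (n * ∫ t, ψ t ^ 2))) atTop atBot :=
    tendsto_neg_atTop_atBot.comp ((tendsto_id.atTop_mul_const hψ).const_mul_atTop hc)
  refine (energy_tendsto.add_atBot mass_tendsto).congr' ?_
  filter_upwards [eventually_gt_atTop 0] with n hn
  rw [integral_deriv_comp_div_sq, Measure.integral_comp_div (fun t => ψ t ^ 2),
    abs_of_pos hn, smul_eq_mul, sub_eq_add_neg]

lemma exists_contDiff_tsupport_subset_Iio_integral_sq_pos :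
    ∃ ψ : ℝ → ℝ, ContDiff ℝ (⊤ : ℕ∞) ψ ∧ HasCompactSupport ψ ∧ tsupport ψ ⊆ Set.Iio 0 ∧
      0 < ∫ t, ψ t ^ 2 := by
  obtain ⟨ψ, hneg, hc, hψ, -, hone⟩ :=
    exists_contDiff_tsupport_subset (n := ⊤) (x := (-1 : ℝ)) (Iio_mem_nhds neg_one_lt_zero)
  refine ⟨ψ, hψ, hc, hneg, ?_⟩
  exact (hψ.continuous.pow 2).integral_pos_of_hasCompactSupport_nonneg_nonzero (x := -1)
    (hasCompactSupport_pow hc two_ne_zero) (fun t => sq_nonneg (ψ t)) (by simp [hone])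

lemma exists_mul_integral_deriv_sq_sub_lt (a : ℝ) {c : ℝ} (hc : 0 < c) (K : ℝ) :
    ∃ φ : ℝ → ℝ, ContDiff ℝ (⊤ : ℕ∞) φ ∧ HasCompactSupport φ ∧ tsupport φ ⊆ Set.Iio 0 ∧
      a * (∫ t, deriv φ t ^ 2) - c * ∫ t, φ t ^ 2 < K := by
  obtain ⟨ψ, hψ, hψc, hneg, hpos⟩ := exists_contDiff_tsupport_subset_Iio_integral_sq_pos
  obtain ⟨n, hlt, hn⟩ := (((tendsto_integral_comp_div_atBot hpos a hc).eventually_lt_atBot K).and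
    (eventually_gt_atTop 0)).exists
  refine ⟨fun t => ψ (t / n), hψ.comp (contDiff_id.div_const n), ?_, fun t ht => ?_, hlt⟩
  · simpa [Function.comp_def, div_eq_mul_inv] using
      hψc.comp_homeomorph (Homeomorph.mulRight₀ n⁻¹ (inv_ne_zero hn.ne'))
  · have : t / n < 0 := hneg (tsupport_comp_subset_preimage ψ (continuous_id.div_const n) ht)
    simpa [div_lt_iff₀ hn] using this

end Dilation

/-- Optimality of the constant in the Hardy inequality on the disc: for every `λ > 1`,
`inf{∫_B |∇u|² − λ∫_B u²/(1−|x|²)² : u ∈ C_c^∞(B)} = −∞`; i.e. for every `M > 0` there is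
`u ∈ C_c^∞(B)` with `∫_B |∇u|² − λ∫_B u²/(1−|x|²)² < −M`. -/
theorem hardy_optimal :
    ∀ lam : ℝ, 1 < lam → ∀ M : ℝ, 0 < M →
      ∃ u : E2 → ℝ, IsTest u ∧
        (∫ x in B2, ‖gradient u x‖ ^ 2)
          - lam * (∫ x in B2, (u x) ^ 2 / (1 - ‖x‖ ^ 2) ^ 2) < -M := by
  intro lam hlam M _
  set V := volume.real B2
  have hVpos : 0 < V :=
    ENNReal.toReal_pos (Metric.measure_ball_pos volume _ one_pos).ne' measure_ball_lt_top.ne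
  obtain ⟨φ, hφ, hc, hneg, hlt⟩ :=
    exists_mul_integral_deriv_sq_sub_lt 4 (sub_pos.2 hlam) (-(M / V))
  have hφ₁ : ContDiff ℝ 1 φ := hφ.of_le (by simp)
  have hdim : Module.finrank ℝ E2 = 2 := by simp
  refine ⟨fun x => emdenFowler φ (1 - ‖x‖ ^ 2), isTest_comp_one_sub_norm_sq
    (contDiff_emdenFowler hφ hc) (tsupport_emdenFowler_subset_Ioi hc), ?_⟩
  have energy_le := setIntegral_ball_norm_gradient_sq_comp_one_sub_norm_sq_le volume hdim
    (contDiff_emdenFowler hφ₁ hc) (hasCompactSupport_emdenFowler hc)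
  have mass_eq := setIntegral_ball_sq_div_sq_comp_one_sub_norm_sq volume hdim (g := emdenFowler φ)
    (support_emdenFowler_subset_Iio ((subset_tsupport φ).trans hneg))
  rw [four_mul_setIntegral_deriv_emdenFowler_sq hφ₁ hc] at energy_le
  rw [setIntegral_emdenFowler_sq_div_sq] at mass_eq
  calc _ ≤ V * ((∫ t, φ t ^ 2) + 4 * ∫ t, deriv φ t ^ 2) - lam * (V * ∫ t, φ t ^ 2) :=
        sub_le_sub energy_le (congrArg (lam * ·) mass_eq).ge
    _ = V * (4 * (∫ t, deriv φ t ^ 2) - (lam - 1) * ∫ t, φ t ^ 2) := by ring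
    _ < V * -(M / V) := by gcongr
    _ = -M := by field_simp
end
end
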